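/- For every ω > 0 and every a > 0 there exist positive constants B₀ and C₀ such that for all B > B₀, all m ∈ ℤ, and every eigenfunction ψ of Q_m(B) with eigenvalue λ ≤ Θ₀ + ω·B^{−1/3}: ∫_{ℝ²₊} e^{2a|ρ|}·(|ψ|² + |∂_τψ|² + B^{−1/3}·|∂_ρψ|²) dτ dρ ≤ C₀·‖ψ‖². -/

import Mathlib

noncomputable section
open MeasureTheory Real Filter Set Topology

/-- The de Gennes energy `λ₁^𝒢(ξ)`. -/
def deGennes (ξ : ℝ) : ℝ :=
  sInf { q : ℝ | ∃ u : ℝ → ℂ, ContDiff ℝ 1 u ∧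
    IntegrableOn (fun t => ‖u t‖ ^ 2) (Ioi 0) ∧
    IntegrableOn (fun t => ‖deriv u t‖ ^ 2 + (t + ξ) ^ 2 * ‖u t‖ ^ 2) (Ioi 0) ∧
    0 < (∫ t in Ioi (0:ℝ), ‖u t‖ ^ 2) ∧
    q = (∫ t in Ioi (0:ℝ), (‖deriv u t‖ ^ 2 + (t + ξ) ^ 2 * ‖u t‖ ^ 2)) /
        ∫ t in Ioi (0:ℝ), ‖u t‖ ^ 2 }

/-- `Θ₀`, the infimum of the de Gennes energy. -/
def Theta0 : ℝ := ⨅ ξ : ℝ, deGennes ξ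

/-- The half plane `ℝ²₊ = {(τ, ρ) : τ > 0}`. -/
def halfPlane : Set (ℝ × ℝ) := Ioi (0:ℝ) ×ˢ (univ : Set ℝ)

/-- The potential of the effective operator `Q_m(B)`. -/
def qPot (B : ℝ) (m : ℤ) (p : ℝ × ℝ) : ℝ :=
  (p.1 + ((m : ℝ) - B / 2) / Real.sqrt B + B ^ (-(1:ℝ)/6) * p.2 ^ 2 / 2) ^ 2

/-- The integrand of the quadratic form `q_m`. -/
def qIntegrand (B : ℝ) (m : ℤ) (ψ : ℝ × ℝ → ℂ) (p : ℝ × ℝ) : ℝ :=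
  ‖fderiv ℝ ψ p (1, 0)‖ ^ 2 + qPot B m p * ‖ψ p‖ ^ 2
    + B ^ (-(1:ℝ)/3) * ‖fderiv ℝ ψ p (0, 1)‖ ^ 2

/-- The quadratic form `q_m[ψ]`. -/
def qForm (B : ℝ) (m : ℤ) (ψ : ℝ × ℝ → ℂ) : ℝ :=
  ∫ p in halfPlane, qIntegrand B m ψ p

/-- Membership in the form domain of `q_m`. -/
def InFormDomain (B : ℝ) (m : ℤ) (ψ : ℝ × ℝ → ℂ) : Prop :=
  ContDiff ℝ 1 ψ ∧ IntegrableOn (fun p => ‖ψ p‖ ^ 2) halfPlane ∧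
    IntegrableOn (qIntegrand B m ψ) halfPlane

/-- The rescaled momentum `δ̃₁ = ((m - B/2)/√B - ξ₀)·B^{1/6}`. -/
def delta1 (B : ℝ) (m : ℤ) (ξ₀ : ℝ) : ℝ :=
  (((m : ℝ) - B / 2) / Real.sqrt B - ξ₀) * B ^ ((1:ℝ)/6)

/-- Second derivative in the `τ` direction. -/
def d2τ (ψ : ℝ × ℝ → ℂ) (p : ℝ × ℝ) : ℂ :=
  fderiv ℝ (fun q => fderiv ℝ ψ q ((1:ℝ), (0:ℝ))) p (1, 0)

/-- Second derivative in the `ρ` direction. -/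
def d2ρ (ψ : ℝ × ℝ → ℂ) (p : ℝ × ℝ) : ℂ :=
  fderiv ℝ (fun q => fderiv ℝ ψ q ((0:ℝ), (1:ℝ))) p (0, 1)

/-- An eigenfunction of the model operator `Q_m(B)` on the half plane, with Neumann
boundary condition at `τ = 0`, eigenvalue `lam`, which is nonzero, smooth up to the
boundary, and lies in `L²` together with its first derivatives. -/
def IsQEigenfunction (B : ℝ) (m : ℤ) (lam : ℝ) (ψ : ℝ × ℝ → ℂ) : Prop :=
  ContDiff ℝ (⊤ : ℕ∞) ψ ∧
  IntegrableOn (fun p => ‖ψ p‖ ^ 2) halfPlane ∧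
  IntegrableOn (fun p => ‖fderiv ℝ ψ p ((1:ℝ), (0:ℝ))‖ ^ 2) halfPlane ∧
  IntegrableOn (fun p => ‖fderiv ℝ ψ p ((0:ℝ), (1:ℝ))‖ ^ 2) halfPlane ∧
  0 < (∫ p in halfPlane, ‖ψ p‖ ^ 2) ∧
  (∀ p ∈ halfPlane,
    -d2τ ψ p - ((B ^ (-(1:ℝ)/3) : ℝ) : ℂ) * d2ρ ψ p + ((qPot B m p : ℝ) : ℂ) * ψ p
      = (lam : ℂ) * ψ p) ∧
  (∀ ρ : ℝ, fderiv ℝ ψ ((0:ℝ), ρ) ((1:ℝ), (0:ℝ)) = 0)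

/-!
The decay is an Agmon estimate: weights `Φ` behaving like `cosh (a ρ)` are admissible once the
quadratic form of `Q_m(B) - λ` is bounded below by a large multiple of `B^{-1/3}` outside a strip
`|ρ| < R`. Such a bound comes, through Picone's identity, from a positive supersolution, of which
only the logarithmic derivatives `-g` in `τ` and `-h` in `ρ` enter.

In `τ` one starts from the de Gennes ground state, a parabolic cylinder function with Neumann
condition at some `ξ₀` with `Θ₀ ≤ ξ₀²`. Its logarithmic derivative solves a Riccati equation, and a
small perturbation of it is a supersolution of the slice operator with momentum
`ξ(ρ) = δ + ε ρ² / 2`, `ε = B^{-1/6}`, whose energy exceeds `ξ₀²` by a multiple of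
`s² / (1 + s²)` at `s = ξ(ρ) - ξ₀`. This gap is large compared to `ε² = B^{-1/3}` except where
`|ξ(ρ) - ξ₀| ≲ ε`. There `(ξ(ρ) - ξ₀) / ε` moves with speed `ρ`, so that the choice
`h = arctan ρ * arctan ((ξ(ρ) - ξ₀) / ε)` gains a term of size `ε² |ρ|`, uniformly in `δ`.

The weights are truncated to have compact support, so that only `u ∈ L²` is used, and Fatou's lemma
removes the truncation.
-/

/-! ### The de Gennes ground state -/

section HermiteIntegral

/-- The integrand `s ^ q * exp (-2 x s - s ^ 2)` of the integral representation of the Hermite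
functions of negative order. -/
def hermiteKernel (q x s : ℝ) : ℝ := s ^ q * exp (-2 * x * s - s ^ 2)

/-- The Hermite function of order `-q - 1` without its normalizing factor `1 / Γ (q + 1)`; this is
meaningful for `-1 < q`, where the integral converges. -/
def hermiteIntegral (q x : ℝ) : ℝ := ∫ s in Ioi (0 : ℝ), hermiteKernel q x s

variable {q x y s R : ℝ}

lemma hermiteKernel_pos (q x : ℝ) (hs : 0 < s) : 0 < hermiteKernel q x s :=
  mul_pos (rpow_pos_of_pos hs q) (exp_pos _)

lemma hermiteKernel_add_one (q x : ℝ) (hs : 0 < s) :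
    hermiteKernel (q + 1) x s = s * hermiteKernel q x s := by
  rw [hermiteKernel, rpow_add_one hs.ne', hermiteKernel]
  ring

lemma hermiteKernel_le (q : ℝ) (hs : 0 < s) (hx : |x| ≤ R) :
    hermiteKernel q x s ≤ exp (2 * R ^ 2) * (s ^ q * exp (-(1 / 2) * s ^ 2)) := by
  have hexp : -2 * x * s - s ^ 2 ≤ 2 * R ^ 2 + -(1 / 2) * s ^ 2 := by
    have hx2 : x ^ 2 ≤ R ^ 2 := sq_le_sq' (abs_le.1 hx).1 (abs_le.1 hx).2
    nlinarith [sq_nonneg (2 * x + s)]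
  calc hermiteKernel q x s ≤ s ^ q * exp (2 * R ^ 2 + -(1 / 2) * s ^ 2) := by
        unfold hermiteKernel; gcongr
    _ = exp (2 * R ^ 2) * (s ^ q * exp (-(1 / 2) * s ^ 2)) := by rw [exp_add]; ring

lemma measurable_hermiteKernel (q x : ℝ) : Measurable (hermiteKernel q x) := by
  unfold hermiteKernel; fun_prop

lemma integrableOn_hermiteKernel_bound (R : ℝ) (hq : -1 < q) :
    IntegrableOn (fun s => exp (2 * R ^ 2) * (s ^ q * exp (-(1 / 2) * s ^ 2))) (Ioi 0) :=
  (integrableOn_rpow_mul_exp_neg_mul_sq (by norm_num) hq).const_mul _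

lemma integrableOn_hermiteKernel (x : ℝ) (hq : -1 < q) :
    IntegrableOn (hermiteKernel q x) (Ioi 0) := by
  refine (integrableOn_hermiteKernel_bound |x| hq).mono'
    (measurable_hermiteKernel q x).aestronglyMeasurable ?_
  filter_upwards [ae_restrict_mem measurableSet_Ioi] with s hs
  rw [norm_of_nonneg (hermiteKernel_pos q x hs).le]
  exact hermiteKernel_le q hs le_rfl

lemma hermiteIntegral_pos (x : ℝ) (hq : -1 < q) : 0 < hermiteIntegral q x := by
  refine (setIntegral_pos_iff_support_of_nonneg_ae ?_ (integrableOn_hermiteKernel x hq)).2 ?_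
  · filter_upwards [ae_restrict_mem measurableSet_Ioi] with s hs
    exact (hermiteKernel_pos q x hs).le
  · have hsupp : Ioi 0 ⊆ Function.support (hermiteKernel q x) :=
      fun s hs => (hermiteKernel_pos q x hs).ne'
    simp [inter_eq_right.2 hsupp]

lemma hermiteIntegral_anti (hq : -1 < q) (hxy : x ≤ y) :
    hermiteIntegral q y ≤ hermiteIntegral q x := by
  refine setIntegral_mono_on (integrableOn_hermiteKernel y hq) (integrableOn_hermiteKernel x hq)
    measurableSet_Ioi fun s hs => ?_
  have hs : 0 < s := hs
  unfold hermiteKernel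
  gcongr ?_ * exp (?_ - s ^ 2)
  nlinarith

lemma hasDerivAt_hermiteKernel_left (q x : ℝ) (hs : 0 < s) :
    HasDerivAt (fun y => hermiteKernel q y s) (-2 * hermiteKernel (q + 1) x s) x := by
  have hlin : HasDerivAt (fun y : ℝ => -2 * y * s - s ^ 2) (-2 * s) x := by
    simpa using (((hasDerivAt_id x).const_mul (-2)).mul_const s).sub_const (s ^ 2)
  refine (hlin.exp.const_mul (s ^ q)).congr_deriv ?_
  rw [hermiteKernel_add_one q x hs, hermiteKernel]
  ring

lemma hasDerivAt_hermiteIntegral (x : ℝ) (hq : -1 < q) :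
    HasDerivAt (hermiteIntegral q) (-2 * hermiteIntegral (q + 1) x) x := by
  have hderiv := (hasDerivAt_integral_of_dominated_loc_of_deriv_le
    (μ := volume.restrict (Ioi (0 : ℝ))) (F := fun y s => hermiteKernel q y s)
    (F' := fun y s => -2 * hermiteKernel (q + 1) y s)
    (bound := fun s => 2 * (exp (2 * (|x| + 1) ^ 2) * (s ^ (q + 1) * exp (-(1 / 2) * s ^ 2))))
    (Metric.ball_mem_nhds x one_pos)
    (Eventually.of_forall fun y => (measurable_hermiteKernel q y).aestronglyMeasurable)
    (integrableOn_hermiteKernel x hq)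
    ((measurable_hermiteKernel (q + 1) x).const_mul _).aestronglyMeasurable ?_
    ((integrableOn_hermiteKernel_bound (|x| + 1) (by linarith)).const_mul 2) ?_).2
  · rwa [integral_const_mul] at hderiv
  · filter_upwards [ae_restrict_mem measurableSet_Ioi] with s hs y hy
    have hy : |y| ≤ |x| + 1 := by
      have hdist : |y - x| < 1 := hy
      linarith [abs_sub_abs_le_abs_sub y x]
    rw [norm_mul, norm_of_nonneg (hermiteKernel_pos _ y hs).le, norm_neg, norm_two]
    gcongr
    exact hermiteKernel_le (q + 1) hs hy
  · filter_upwards [ae_restrict_mem measurableSet_Ioi] with s hs y _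
    exact hasDerivAt_hermiteKernel_left q y hs

lemma hasDerivAt_hermiteKernel_right (q x : ℝ) (hs : 0 < s) :
    HasDerivAt (hermiteKernel q x) (q * hermiteKernel (q - 1) x s - 2 * x * hermiteKernel q x s
      - 2 * hermiteKernel (q + 1) x s) s := by
  have hexponent : HasDerivAt (fun s : ℝ => -2 * x * s - s ^ 2) (-2 * x - 2 * s) s := by
    simpa using ((hasDerivAt_id' s).const_mul (-2 * x)).fun_sub (hasDerivAt_pow 2 s)
  refine ((hasDerivAt_rpow_const (Or.inl hs.ne')).mul hexponent.exp).congr_deriv ?_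
  rw [hermiteKernel_add_one q x hs, hermiteKernel, hermiteKernel]
  ring

lemma continuousWithinAt_hermiteKernel_zero (x : ℝ) (hq : 0 ≤ q) :
    ContinuousWithinAt (hermiteKernel q x) (Ici 0) 0 := by
  unfold hermiteKernel
  exact ((continuous_rpow_const hq).mul (by fun_prop)).continuousWithinAt

/- For `q = 0` the divergent integral `hermiteIntegral (-1) x` carries the factor `0`, and `0 ^ q`
is the boundary value of the kernel. -/
lemma hermiteIntegral_recurrence (x : ℝ) (hq : 0 ≤ q) :
    q * hermiteIntegral (q - 1) x - 2 * x * hermiteIntegral q x - 2 * hermiteIntegral (q + 1) x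
      = -(0 : ℝ) ^ q := by
  have hint₀ : IntegrableOn (fun s => q * hermiteKernel (q - 1) x s) (Ioi 0) := by
    rcases hq.eq_or_lt with rfl | hq
    · simp
    · exact (integrableOn_hermiteKernel x (by linarith)).const_mul q
  have hint₁ : IntegrableOn (fun s => 2 * x * hermiteKernel q x s) (Ioi 0) :=
    (integrableOn_hermiteKernel x (by linarith)).const_mul _
  have hint₂ : IntegrableOn (fun s => 2 * hermiteKernel (q + 1) x s) (Ioi 0) :=
    (integrableOn_hermiteKernel x (by linarith)).const_mul _
  have hderiv : ∀ s ∈ Ioi (0 : ℝ), HasDerivAt (hermiteKernel q x) _ s :=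
    fun s hs => hasDerivAt_hermiteKernel_right q x hs
  have hlim : Tendsto (hermiteKernel q x) atTop (𝓝 0) :=
    tendsto_zero_of_hasDerivAt_of_integrableOn_Ioi hderiv ((hint₀.sub hint₁).sub hint₂)
      (integrableOn_hermiteKernel x (by linarith))
  have hftc := integral_Ioi_of_hasDerivAt_of_tendsto (continuousWithinAt_hermiteKernel_zero x hq)
    hderiv ((hint₀.sub hint₁).sub hint₂) hlim
  rw [integral_sub (hint₀.fun_sub hint₁) hint₂, integral_sub hint₀ hint₁, integral_const_mul,
    integral_const_mul, integral_const_mul] at hftc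
  simpa [hermiteIntegral, hermiteKernel] using hftc

lemma rpow_le_rpow_add_rpow {a b : ℝ} (hs : 0 < s) (ha : a ≤ q) (hb : q ≤ b) :
    s ^ q ≤ s ^ a + s ^ b := by
  rcases le_total s 1 with h | h
  · exact le_add_of_le_of_nonneg (rpow_le_rpow_of_exponent_ge hs h ha) (rpow_pos_of_pos hs b).le
  · exact le_add_of_nonneg_of_le (rpow_pos_of_pos hs a).le (rpow_le_rpow_of_exponent_le h hb)

lemma continuousAt_hermiteIntegral_uncurry (x : ℝ) (hq : -1 < q) :
    ContinuousAt (fun z : ℝ × ℝ => hermiteIntegral z.1 z.2) (q, x) := by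
  refine continuousAt_of_dominated (bound := fun s =>
    exp (2 * (|x| + 1) ^ 2) * (s ^ ((q - 1) / 2) * exp (-(1 / 2) * s ^ 2)) +
    exp (2 * (|x| + 1) ^ 2) * (s ^ (q + 1) * exp (-(1 / 2) * s ^ 2)))
    (Eventually.of_forall fun z => (measurable_hermiteKernel _ _).aestronglyMeasurable) ?_
    ((integrableOn_hermiteKernel_bound _ (by linarith)).add
      (integrableOn_hermiteKernel_bound _ (by linarith))) ?_
  · have hnhds : Ioo ((q - 1) / 2) (q + 1) ×ˢ Metric.ball x 1 ∈ 𝓝 (q, x) :=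
      prod_mem_nhds (Ioo_mem_nhds (by linarith) (by linarith)) (Metric.ball_mem_nhds x one_pos)
    filter_upwards [hnhds] with z ⟨hz₁, hz₂⟩
    have hz₂ : |z.2| ≤ |x| + 1 := by
      have hdist : |z.2 - x| < 1 := hz₂
      linarith [abs_sub_abs_le_abs_sub z.2 x]
    filter_upwards [ae_restrict_mem measurableSet_Ioi] with s hs
    rw [norm_of_nonneg (hermiteKernel_pos _ _ hs).le]
    refine (hermiteKernel_le _ hs hz₂).trans ?_
    rw [← mul_add, ← add_mul]
    gcongr
    exact rpow_le_rpow_add_rpow hs hz₁.1.le hz₁.2.le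
  · filter_upwards [ae_restrict_mem measurableSet_Ioi] with s hs
    have hs : s ≠ 0 := ne_of_gt hs
    unfold hermiteKernel
    fun_prop (disch := assumption)

/- Shooting in the parameter `ξ`: the function `shoot` is `-1/2` at `ξ = -1` and positive at
`ξ = 0`. -/
lemma exists_hermiteIntegral_neumann : ∃ ξ ∈ Ioo (-1 : ℝ) 0, ∃ q, -1 < q ∧ 2 * q + 1 = -ξ ^ 2 ∧
    ξ * hermiteIntegral q ξ + 2 * hermiteIntegral (q + 1) ξ = 0 := by
  let shoot : ℝ → ℝ := fun ξ => (1 + ξ ^ 2) / 2 * hermiteIntegral ((1 - ξ ^ 2) / 2) ξ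
    + ξ * hermiteIntegral ((1 - ξ ^ 2) / 2 + 1) ξ
  have hcont : ContinuousOn shoot (Icc (-1) 0) := by
    have hK : ∀ c ≥ (0 : ℝ), ContinuousOn (fun ξ : ℝ => hermiteIntegral ((1 - ξ ^ 2) / 2 + c) ξ)
        (Icc (-1) 0) := fun c hc ξ hξ =>
      ((continuousAt_hermiteIntegral_uncurry ξ (by nlinarith [hξ.1, hξ.2])).comp_of_eq
        (f := fun ξ : ℝ => ((1 - ξ ^ 2) / 2 + c, ξ)) (by fun_prop) rfl).continuousWithinAt
    have hK₀ := hK 0 le_rfl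
    simp only [add_zero] at hK₀
    exact (ContinuousOn.mul (by fun_prop) hK₀).add (continuousOn_id.mul (hK 1 zero_le_one))
  have hneg : shoot (-1) < 0 := by
    have hrec := hermiteIntegral_recurrence (-1) (le_refl 0)
    norm_num at hrec
    norm_num [shoot]
    linarith
  have hpos : 0 < shoot 0 := by
    have hK := hermiteIntegral_pos 0 (q := 1 / 2) (by norm_num)
    norm_num [shoot] at hK ⊢
    exact hK
  obtain ⟨ξ, hξ, hzero⟩ := intermediate_value_Ioo (by norm_num) hcont ⟨hneg, hpos⟩
  have hp : 0 < (1 - ξ ^ 2) / 2 := by nlinarith [hξ.1, hξ.2]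
  refine ⟨ξ, hξ, (1 - ξ ^ 2) / 2 - 1, by linarith, by ring, ?_⟩
  have hrec := hermiteIntegral_recurrence ξ hp.le
  rw [zero_rpow hp.ne'] at hrec
  rw [sub_add_cancel]
  refine (mul_eq_zero.1 ?_).resolve_left hp.ne'
  linear_combination ξ * hrec + 2 * hzero

end HermiteIntegral

section GroundState

/-- Up to a constant factor, the parabolic cylinder function `D_{-q-1}(√2 x)`: the solution of the
Weber equation `φ'' = (x ^ 2 + 2 q + 1) φ` decaying at `+∞`. -/
def weberFunction (q x : ℝ) : ℝ := exp (-x ^ 2 / 2) * hermiteIntegral q x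

/-- The negative logarithmic derivative of `weberFunction q`. -/
def weberRiccati (q x : ℝ) : ℝ := x + 2 * hermiteIntegral (q + 1) x / hermiteIntegral q x

variable {q ξ Λ : ℝ}

lemma weberFunction_pos (x : ℝ) (hq : -1 < q) : 0 < weberFunction q x :=
  mul_pos (exp_pos _) (hermiteIntegral_pos x hq)

lemma hasDerivAt_weberFunction (x : ℝ) (hq : -1 < q) :
    HasDerivAt (weberFunction q) (-(x * weberFunction q x + 2 * weberFunction (q + 1) x)) x := by
  have hgauss : HasDerivAt (fun x : ℝ => exp (-x ^ 2 / 2)) (exp (-x ^ 2 / 2) * -x) x :=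
    (((hasDerivAt_pow 2 x).neg.div_const 2).congr_deriv (by simp; ring)).exp
  refine (hgauss.mul (hasDerivAt_hermiteIntegral x hq)).congr_deriv ?_
  unfold weberFunction
  ring

lemma continuous_weberFunction (hq : -1 < q) : Continuous (weberFunction q) :=
  continuous_iff_continuousAt.2 fun x => (hasDerivAt_weberFunction x hq).continuousAt

lemma weberFunction_recurrence (x : ℝ) (hq : -1 < q) :
    (q + 1) * weberFunction q x - 2 * x * weberFunction (q + 1) x
      - 2 * weberFunction (q + 1 + 1) x = 0 := by
  have hrec := hermiteIntegral_recurrence x (q := q + 1) (by linarith)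
  rw [zero_rpow (by linarith), add_sub_cancel_right] at hrec
  unfold weberFunction
  linear_combination exp (-x ^ 2 / 2) * hrec

lemma hasDerivAt_deriv_weberFunction (x : ℝ) (hq : -1 < q) :
    HasDerivAt (fun x => -(x * weberFunction q x + 2 * weberFunction (q + 1) x))
      ((x ^ 2 + 2 * q + 1) * weberFunction q x) x := by
  have hderiv := (((hasDerivAt_id' x).fun_mul (hasDerivAt_weberFunction x hq)).fun_add
    ((hasDerivAt_weberFunction x (q := q + 1) (by linarith)).const_mul 2)).fun_neg
  refine hderiv.congr_deriv ?_
  linear_combination -2 * weberFunction_recurrence x hq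

lemma memLp_pow_mul_weberFunction (n : ℕ) (ξ : ℝ) (hq : -1 < q) :
    MemLp (fun t => (t + ξ) ^ n * weberFunction q (t + ξ)) 2 (volume.restrict (Ioi 0)) := by
  have hcont := continuous_weberFunction hq
  have hgauss : Integrable fun x : ℝ => (x ^ n * exp (-x ^ 2 / 2)) ^ 2 := by
    have h := integrable_rpow_mul_exp_neg_mul_sq one_pos (s := (2 * n : ℕ)) (by
      exact neg_one_lt_zero.trans_le (Nat.cast_nonneg _))
    refine h.congr (Eventually.of_forall fun x => ?_)
    simp only [rpow_natCast, mul_pow, ← pow_mul, ← exp_nat_mul]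
    ring_nf
  refine (memLp_two_iff_integrable_sq (by fun_prop)).2 ?_
  refine ((hgauss.comp_add_right ξ).integrableOn.const_mul (hermiteIntegral q ξ ^ 2)).mono'
    (by fun_prop) ?_
  filter_upwards [ae_restrict_mem measurableSet_Ioi] with t ht
  have hanti := hermiteIntegral_anti hq (le_add_of_nonneg_left (a := ξ) (le_of_lt ht))
  rw [norm_of_nonneg (sq_nonneg _), weberFunction, ← mul_assoc, mul_pow, mul_comm]
  gcongr
  exact (hermiteIntegral_pos _ hq).le

lemma weberRiccati_mul_weberFunction (x : ℝ) (hq : -1 < q) :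
    weberRiccati q x * weberFunction q x
      = x * weberFunction q x + 2 * weberFunction (q + 1) x := by
  have hK := (hermiteIntegral_pos x hq).ne'
  unfold weberRiccati weberFunction
  field_simp

lemma lt_weberRiccati (x : ℝ) (hq : -1 < q) : x < weberRiccati q x :=
  lt_add_of_pos_right x (div_pos (mul_pos two_pos (hermiteIntegral_pos x (by linarith)))
    (hermiteIntegral_pos x hq))

lemma hasDerivAt_weberRiccati (x : ℝ) (hq : -1 < q) :
    HasDerivAt (weberRiccati q) (weberRiccati q x ^ 2 - x ^ 2 - (2 * q + 1)) x := by
  have hφ : ∀ x, weberFunction q x ≠ 0 := fun x => (weberFunction_pos x hq).ne'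
  have hquot : weberRiccati q
      = fun x => -(-(x * weberFunction q x + 2 * weberFunction (q + 1) x) / weberFunction q x) := by
    ext x
    rw [eq_comm, neg_div, neg_neg, div_eq_iff (hφ x), weberRiccati_mul_weberFunction x hq]
  have hderiv := ((hasDerivAt_deriv_weberFunction x hq).fun_div (hasDerivAt_weberFunction x hq)
    (hφ x)).fun_neg
  rw [← hquot] at hderiv
  refine hderiv.congr_deriv ?_
  rw [← weberRiccati_mul_weberFunction x hq]
  have := hφ x
  field_simp
  ring

lemma deGennes_nonneg (ξ : ℝ) : 0 ≤ deGennes ξ := by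
  refine Real.sInf_nonneg ?_
  rintro _ ⟨u, -, -, -, hu, rfl⟩
  exact div_nonneg (integral_nonneg fun t => by positivity) hu.le

lemma Theta0_le_deGennes (ξ : ℝ) : Theta0 ≤ deGennes ξ :=
  ciInf_le ⟨0, forall_mem_range.2 deGennes_nonneg⟩ ξ

lemma deGennes_le_of_real_trial {f f' : ℝ → ℝ} (hf : ∀ t, HasDerivAt f (f' t) t)
    (hf' : Continuous f') (hfL2 : IntegrableOn (fun t => f t ^ 2) (Ioi 0))
    (hform : IntegrableOn (fun t => f' t ^ 2 + (t + ξ) ^ 2 * f t ^ 2) (Ioi 0))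
    (hpos : 0 < ∫ t in Ioi (0 : ℝ), f t ^ 2)
    (hle : ∫ t in Ioi (0 : ℝ), (f' t ^ 2 + (t + ξ) ^ 2 * f t ^ 2)
      ≤ Λ * ∫ t in Ioi (0 : ℝ), f t ^ 2) :
    deGennes ξ ≤ Λ := by
  have hderiv (t : ℝ) : HasDerivAt (fun t => (f t : ℂ)) (f' t) t := (hf t).ofReal_comp
  have hderiv_eq : deriv (fun t => (f t : ℂ)) = fun t => (f' t : ℂ) :=
    funext fun t => (hderiv t).deriv
  have hnorm (r : ℝ) : ‖(r : ℂ)‖ ^ 2 = r ^ 2 := by rw [Complex.norm_real, norm_eq_abs, sq_abs]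
  refine csInf_le_of_le ⟨0, ?_⟩ ⟨fun t => (f t : ℂ), ?_, ?_, ?_, ?_, rfl⟩ ?_
  · rintro _ ⟨u, -, -, -, hu, rfl⟩
    exact div_nonneg (integral_nonneg fun t => by positivity) hu.le
  · refine contDiff_one_iff_deriv.2 ⟨fun t => (hderiv t).differentiableAt, ?_⟩
    rw [hderiv_eq]
    fun_prop
  all_goals simp only [hderiv_eq, hnorm]
  exacts [hfL2, hform, hpos, (div_le_iff₀ hpos).2 hle]

lemma integral_energy_eq_of_eigenfunction {f f' : ℝ → ℝ} {V : ℝ → ℝ}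
    (hf : ∀ t, HasDerivAt f (f' t) t) (hf' : ∀ t, HasDerivAt f' ((V t - Λ) * f t) t)
    (h0 : f' 0 = 0) (hfL2 : MemLp f 2 (volume.restrict (Ioi 0)))
    (hf'L2 : MemLp f' 2 (volume.restrict (Ioi 0)))
    (hVf : IntegrableOn (fun t => V t * f t ^ 2) (Ioi 0)) :
    ∫ t in Ioi (0 : ℝ), (f' t ^ 2 + V t * f t ^ 2) = Λ * ∫ t in Ioi (0 : ℝ), f t ^ 2 := by
  have hderiv (t : ℝ) : HasDerivAt (fun t => f t * f' t)
      (f' t ^ 2 + V t * f t ^ 2 - Λ * f t ^ 2) t :=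
    ((hf t).fun_mul (hf' t)).congr_deriv (by ring)
  have hform := hf'L2.integrable_sq.fun_add hVf
  have hmass := hfL2.integrable_sq.const_mul Λ
  have hlim := tendsto_zero_of_hasDerivAt_of_integrableOn_Ioi (a := 0) (fun t _ => hderiv t)
    (hform.sub hmass) (hfL2.integrable_mul hf'L2)
  have hftc := integral_Ioi_of_hasDerivAt_of_tendsto' (a := 0) (fun t _ => hderiv t)
    (hform.sub hmass) hlim
  rw [integral_sub hform hmass, integral_const_mul, h0] at hftc
  linarith

lemma deGennes_le_of_weberRiccati_eq_zero (hq : -1 < q) (hξ : weberRiccati q ξ = 0) :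
    deGennes ξ ≤ -(2 * q + 1) := by
  let f : ℝ → ℝ := fun t => weberFunction q (t + ξ)
  let f' : ℝ → ℝ := fun t =>
    -((t + ξ) * weberFunction q (t + ξ) + 2 * weberFunction (q + 1) (t + ξ))
  have hf (t : ℝ) : HasDerivAt f (f' t) t := (hasDerivAt_weberFunction _ hq).comp_add_const t ξ
  have hf' (t : ℝ) : HasDerivAt f' (((t + ξ) ^ 2 - -(2 * q + 1)) * f t) t :=
    ((hasDerivAt_deriv_weberFunction _ hq).comp_add_const t ξ).congr_deriv (by simp only [f]; ring)
  have hfL2 : MemLp f 2 (volume.restrict (Ioi 0)) := by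
    simpa using memLp_pow_mul_weberFunction 0 ξ hq
  have htf := memLp_pow_mul_weberFunction 1 ξ hq
  have hf'L2 : MemLp f' 2 (volume.restrict (Ioi 0)) := by
    have h₁ := (memLp_pow_mul_weberFunction 0 ξ (q := q + 1) (by linarith)).const_mul 2
    refine (htf.add h₁).neg.ae_eq (Eventually.of_forall fun t => ?_)
    simp [f']
  have hVf : IntegrableOn (fun t => (t + ξ) ^ 2 * f t ^ 2) (Ioi 0) := by
    refine htf.integrable_sq.congr (Eventually.of_forall fun t => ?_)
    simp only [f]
    ring
  have hf0 : f' 0 = 0 := by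
    simp only [f', zero_add]
    rw [← weberRiccati_mul_weberFunction ξ hq, hξ, zero_mul, neg_zero]
  refine deGennes_le_of_real_trial hf
    (continuous_iff_continuousAt.2 fun t => (hf' t).continuousAt) hfL2.integrable_sq
    (hf'L2.integrable_sq.add hVf) ?_
    (integral_energy_eq_of_eigenfunction hf hf' hf0 hfL2 hf'L2 hVf).le
  refine (setIntegral_pos_iff_support_of_nonneg_ae (Eventually.of_forall fun t => sq_nonneg _)
    hfL2.integrable_sq).2 ?_
  have hsupp : Function.support (fun t => f t ^ 2) = univ :=
    Function.support_eq_univ fun t => (pow_pos (weberFunction_pos _ hq) 2).ne'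
  simp [hsupp]

/-- The negative logarithmic derivative `F` of a positive function `φ` with
`φ'' = (x ^ 2 - ξ₀ ^ 2) φ` and `φ' ξ₀ = 0`, so that `t ↦ φ (t + ξ₀)` is a ground state of the
de Gennes operator of parameter `ξ₀` and energy `ξ₀ ^ 2`. -/
structure IsGroundStateRiccati (ξ₀ : ℝ) (F : ℝ → ℝ) : Prop where
  mem_Ioo : ξ₀ ∈ Ioo (-1) 0
  apply_self : F ξ₀ = 0
  lt_apply : ∀ x, x < F x
  hasDerivAt : ∀ x, HasDerivAt F (F x ^ 2 - x ^ 2 + ξ₀ ^ 2) x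

lemma exists_isGroundStateRiccati :
    ∃ ξ₀ F, IsGroundStateRiccati ξ₀ F ∧ Theta0 ≤ ξ₀ ^ 2 := by
  obtain ⟨ξ₀, hξ₀, q, hq, hqξ, hneumann⟩ := exists_hermiteIntegral_neumann
  have hzero : weberRiccati q ξ₀ = 0 := by
    have hK := (hermiteIntegral_pos ξ₀ hq).ne'
    unfold weberRiccati
    field_simp
    rwa [mul_zero]
  refine ⟨ξ₀, weberRiccati q, ⟨hξ₀, hzero, fun x => lt_weberRiccati x hq, fun x => ?_⟩, ?_⟩
  · exact (hasDerivAt_weberRiccati x hq).congr_deriv (by linarith)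
  · have hle := deGennes_le_of_weberRiccati_eq_zero hq hzero
    linarith [Theta0_le_deGennes ξ₀]

end GroundState

section SaturatedSquare

/-- The function `s ↦ s ^ 2` saturated at height one, in which all gaps are measured. -/
def saturatedSq (s : ℝ) : ℝ := s ^ 2 / (1 + s ^ 2)

lemma saturatedSq_nonneg (s : ℝ) : 0 ≤ saturatedSq s := by
  unfold saturatedSq; positivity

lemma saturatedSq_le_one (s : ℝ) : saturatedSq s ≤ 1 :=
  (div_le_one (by positivity)).2 (by linarith)

lemma saturatedSq_le_sq (s : ℝ) : saturatedSq s ≤ s ^ 2 :=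
  div_le_self (sq_nonneg s) (by linarith [sq_nonneg s])

lemma contDiff_saturatedSq : ContDiff ℝ 1 saturatedSq :=
  ContDiff.div (by fun_prop) (by fun_prop) fun s => by positivity

lemma hasDerivAt_saturatedSq (s : ℝ) :
    HasDerivAt saturatedSq (2 * s / (1 + s ^ 2) ^ 2) s := by
  have hne : 1 + s ^ 2 ≠ 0 := by positivity
  have hsq : HasDerivAt (fun s : ℝ => s ^ 2) (2 * s) s := by simpa using hasDerivAt_pow 2 s
  refine (hsq.div (hsq.const_add 1) hne).congr_deriv ?_
  field_simp
  ring

end SaturatedSquare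

section RiccatiSupersolution

lemma abs_arctan_le (x : ℝ) : |arctan x| ≤ 8 / 5 := by
  rw [abs_le]
  constructor <;> linarith [arctan_lt_pi_div_two x, neg_pi_div_two_lt_arctan x, pi_lt_d2]

lemma riccati_comparison_left {F G G' q : ℝ → ℝ} {x₀ : ℝ}
    (hF : ∀ x, HasDerivAt F (F x ^ 2 + q x) x) (hG : ∀ x, HasDerivAt G (G' x) x)
    (hsuper : ∀ x < x₀, G x ^ 2 + q x ≤ G' x) (h0 : G x₀ ≤ F x₀) {x : ℝ} (hx : x ≤ x₀) :
    G x ≤ F x := by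
  have hFc : Continuous F := continuous_iff_continuousAt.2 fun x => (hF x).continuousAt
  have hGc : Continuous G := continuous_iff_continuousAt.2 fun x => (hG x).continuousAt
  let w : ℝ → ℝ := fun x => exp (-∫ t in x₀..x, (F t + G t))
  have hw (x : ℝ) : HasDerivAt w (w x * -(F x + G x)) x :=
    ((hFc.add hGc).integral_hasStrictDerivAt x₀ x).hasDerivAt.neg.exp
  have hderiv (x : ℝ) : HasDerivAt (fun x => (F x - G x) * w x)
      ((G x ^ 2 + q x - G' x) * w x) x :=
    (((hF x).fun_sub (hG x)).fun_mul (hw x)).congr_deriv (by ring)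
  have hanti : AntitoneOn (fun x => (F x - G x) * w x) (Iic x₀) := by
    refine antitoneOn_of_deriv_nonpos (convex_Iic x₀)
      (fun x _ => (hderiv x).continuousAt.continuousWithinAt)
      (fun x _ => (hderiv x).differentiableAt.differentiableWithinAt) fun x hx => ?_
    rw [interior_Iic] at hx
    rw [(hderiv x).deriv]
    exact mul_nonpos_of_nonpos_of_nonneg (sub_nonpos.2 (hsuper x hx)) (exp_pos _).le
  have hnonneg : 0 ≤ (F x - G x) * w x :=
    (mul_nonneg (sub_nonneg.2 h0) (exp_pos _).le).trans (hanti hx self_mem_Iic hx)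
  exact sub_nonneg.1 (nonneg_of_mul_nonneg_left hnonneg (exp_pos _))

variable {κ ξ₀ x : ℝ} {F : ℝ → ℝ}

namespace IsGroundStateRiccati

lemma hasDerivAt_sub_saturatedSq (hF : IsGroundStateRiccati ξ₀ F) (κ x : ℝ) :
    HasDerivAt (fun x => F x - κ * saturatedSq (x - ξ₀))
      (F x ^ 2 - x ^ 2 + ξ₀ ^ 2 - κ * (2 * (x - ξ₀) / (1 + (x - ξ₀) ^ 2) ^ 2)) x :=
  (hF.hasDerivAt x).fun_sub
    (((hasDerivAt_saturatedSq (x - ξ₀)).comp_sub_const x ξ₀).const_mul κ)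

lemma mul_saturatedSq_le_left (hF : IsGroundStateRiccati ξ₀ F) (hx : x ≤ ξ₀) :
    -ξ₀ / 3 * saturatedSq (x - ξ₀) ≤ F x := by
  obtain ⟨hξ₀, hξ₀'⟩ := hF.mem_Ioo
  refine riccati_comparison_left (q := fun x => ξ₀ ^ 2 - x ^ 2)
    (G := fun x => -ξ₀ / 3 * saturatedSq (x - ξ₀))
    (fun x => (hF.hasDerivAt x).congr_deriv (by ring))
    (fun x => ((hasDerivAt_saturatedSq (x - ξ₀)).comp_sub_const x ξ₀).const_mul (-ξ₀ / 3))
    (fun y hy => ?_) ?_ hx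
  · have hs : y - ξ₀ < 0 := sub_neg.2 hy
    have hsq : (-ξ₀ / 3 * saturatedSq (y - ξ₀)) ^ 2 ≤ (y - ξ₀) ^ 2 :=
      calc (-ξ₀ / 3 * saturatedSq (y - ξ₀)) ^ 2 ≤ saturatedSq (y - ξ₀) ^ 2 :=
            pow_le_pow_left₀ (mul_nonneg (by linarith) (saturatedSq_nonneg _))
              (mul_le_of_le_one_left (saturatedSq_nonneg _) (by linarith)) 2
        _ ≤ saturatedSq (y - ξ₀) := pow_le_of_le_one (saturatedSq_nonneg _)
            (saturatedSq_le_one _) two_ne_zero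
        _ ≤ (y - ξ₀) ^ 2 := saturatedSq_le_sq _
    have hslope : 2 * (y - ξ₀) ≤ 2 * (y - ξ₀) / (1 + (y - ξ₀) ^ 2) ^ 2 := by
      rw [le_div_iff₀ (by positivity)]
      nlinarith [one_le_pow₀ (n := 2) (le_add_of_nonneg_right (a := (1 : ℝ)) (sq_nonneg (y - ξ₀)))]
    have hslope' := mul_le_mul_of_nonneg_left hslope (by linarith : 0 ≤ -ξ₀ / 3)
    linarith [mul_pos_of_neg_of_neg hs hξ₀']
  · simp [hF.apply_self, saturatedSq]

lemma mul_saturatedSq_le_right (hF : IsGroundStateRiccati ξ₀ F) (hx : ξ₀ ≤ x) :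
    -ξ₀ / 3 * saturatedSq (x - ξ₀) ≤ F x := by
  have hξ₀ : ξ₀ < 0 := hF.mem_Ioo.2
  rcases le_total (-ξ₀ / 3) x with hlarge | hsmall
  · calc -ξ₀ / 3 * saturatedSq (x - ξ₀) ≤ -ξ₀ / 3 :=
          mul_le_of_le_one_right (by linarith) (saturatedSq_le_one _)
      _ ≤ F x := hlarge.trans (hF.lt_apply x).le
  have hmono : MonotoneOn (fun x => F x - -ξ₀ / 3 * saturatedSq (x - ξ₀)) (Icc ξ₀ (-ξ₀ / 3)) := by
    refine monotoneOn_of_deriv_nonneg (convex_Icc _ _)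
      (fun y _ => (hF.hasDerivAt_sub_saturatedSq _ y).continuousAt.continuousWithinAt)
      (fun y _ => (hF.hasDerivAt_sub_saturatedSq _ y).differentiableAt.differentiableWithinAt)
      fun y hy => ?_
    rw [interior_Icc] at hy
    rw [(hF.hasDerivAt_sub_saturatedSq _ y).deriv]
    have hs : 0 < y - ξ₀ := sub_pos.2 hy.1
    have hslope : 2 * (y - ξ₀) / (1 + (y - ξ₀) ^ 2) ^ 2 ≤ 2 * (y - ξ₀) :=
      div_le_self (by positivity) (one_le_pow₀ (by linarith [sq_nonneg (y - ξ₀)]))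
    have hslope' := mul_le_mul_of_nonneg_left hslope (by linarith : 0 ≤ -ξ₀ / 3)
    nlinarith [sq_nonneg (F y), mul_nonneg hs.le (by linarith [hy.2] : 0 ≤ -ξ₀ / 3 - y)]
  have hle := hmono ⟨le_rfl, by linarith⟩ ⟨hx, hsmall⟩ hx
  simp only [hF.apply_self, saturatedSq, sub_self] at hle
  unfold saturatedSq
  linarith

lemma mul_saturatedSq_le (hF : IsGroundStateRiccati ξ₀ F) (x : ℝ) :
    -ξ₀ / 3 * saturatedSq (x - ξ₀) ≤ F x :=
  (le_total x ξ₀).elim hF.mul_saturatedSq_le_left hF.mul_saturatedSq_le_right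

lemma contDiff (hF : IsGroundStateRiccati ξ₀ F) : ContDiff ℝ 1 F := by
  have hcont : Continuous F := continuous_iff_continuousAt.2 fun x => (hF.hasDerivAt x).continuousAt
  refine contDiff_one_iff_deriv.2 ⟨fun x => (hF.hasDerivAt x).differentiableAt, ?_⟩
  rw [funext fun x => (hF.hasDerivAt x).deriv]
  fun_prop

end IsGroundStateRiccati

/-- Perturbation of a solution `F` of the Riccati equation which is, for each parameter `ξ` of the
de Gennes operator, a strict supersolution with nonnegative value at the boundary point `ξ`. -/
def perturbedRiccati (κ ξ₀ : ℝ) (F : ℝ → ℝ) (ξ x : ℝ) : ℝ :=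
  F x - κ ^ 2 / 25 * saturatedSq (ξ - ξ₀) * (3 - arctan (x - ξ₀))

lemma perturbedRiccati_self_nonneg (hκ : 0 < κ) (hκ' : κ ≤ 1 / 2)
    (hF : ∀ x, κ * saturatedSq (x - ξ₀) ≤ F x) (ξ : ℝ) : 0 ≤ perturbedRiccati κ ξ₀ F ξ ξ := by
  have hsat := saturatedSq_nonneg (ξ - ξ₀)
  have harctan : 3 - arctan (ξ - ξ₀) ≤ 5 := by linarith [(abs_le.1 (abs_arctan_le (ξ - ξ₀))).1]
  refine sub_nonneg.2 (le_trans ?_ (hF ξ))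
  calc κ ^ 2 / 25 * saturatedSq (ξ - ξ₀) * (3 - arctan (ξ - ξ₀))
      ≤ κ ^ 2 / 25 * saturatedSq (ξ - ξ₀) * 5 := by gcongr
    _ ≤ κ * saturatedSq (ξ - ξ₀) := by
      rw [mul_right_comm]
      gcongr
      nlinarith

lemma hasDerivAt_perturbedRiccati {F' : ℝ} (hF : HasDerivAt F F' x) (κ ξ₀ ξ : ℝ) :
    HasDerivAt (perturbedRiccati κ ξ₀ F ξ)
      (F' + κ ^ 2 / 25 * saturatedSq (ξ - ξ₀) * (1 / (1 + (x - ξ₀) ^ 2))) x := by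
  have harctan : HasDerivAt (fun x => 3 - arctan (x - ξ₀)) (-(1 / (1 + (x - ξ₀) ^ 2))) x :=
    ((hasDerivAt_arctan (x - ξ₀)).comp_sub_const x ξ₀).const_sub 3
  exact (hF.sub (harctan.const_mul _)).congr_deriv (by ring)

lemma contDiff_perturbedRiccati (hF : ContDiff ℝ 1 F) (κ ξ₀ : ℝ) :
    ContDiff ℝ 1 fun p : ℝ × ℝ => perturbedRiccati κ ξ₀ F p.1 p.2 := by
  have hsat : ContDiff ℝ 1 fun p : ℝ × ℝ => saturatedSq (p.1 - ξ₀) :=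
    contDiff_saturatedSq.comp (by fun_prop)
  have harctan : ContDiff ℝ 1 fun p : ℝ × ℝ => arctan (p.2 - ξ₀) :=
    contDiff_arctan.comp (by fun_prop)
  unfold perturbedRiccati
  fun_prop

lemma le_deriv_perturbedRiccati_sub_sq (hκ : 0 < κ) (hκ' : κ ≤ 1 / 2)
    (hF : ∀ x, κ * saturatedSq (x - ξ₀) ≤ F x)
    (hderiv : HasDerivAt F (F x ^ 2 - x ^ 2 + ξ₀ ^ 2) x) (ξ : ℝ) :
    ξ₀ ^ 2 + κ ^ 3 / 25 * saturatedSq (ξ - ξ₀)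
      ≤ deriv (perturbedRiccati κ ξ₀ F ξ) x - perturbedRiccati κ ξ₀ F ξ x ^ 2 + x ^ 2 := by
  rw [(hasDerivAt_perturbedRiccati hderiv κ ξ₀ ξ).deriv, perturbedRiccati]
  set μ := κ ^ 2 / 25 * saturatedSq (ξ - ξ₀) with hμ
  set k := 3 - arctan (x - ξ₀)
  have hμ0 : 0 ≤ μ := mul_nonneg (by positivity) (saturatedSq_nonneg _)
  have hμ_le : μ ≤ κ ^ 2 / 25 := mul_le_of_le_one_right (by positivity) (saturatedSq_le_one _)
  have hk1 : 1 ≤ k := by linarith [(abs_le.1 (abs_arctan_le (x - ξ₀))).2]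
  have hk5 : k ≤ 5 := by linarith [(abs_le.1 (abs_arctan_le (x - ξ₀))).1]
  have hμk : μ * k ^ 2 ≤ κ := by
    calc μ * k ^ 2 ≤ κ ^ 2 / 25 * 5 ^ 2 := by gcongr
      _ ≤ κ := by nlinarith
  have hgain : 2 * κ ≤ 1 / (1 + (x - ξ₀) ^ 2) + 2 * (κ * saturatedSq (x - ξ₀)) := by
    rw [saturatedSq, mul_div_assoc', mul_div_assoc', ← add_div, le_div_iff₀ (by positivity)]
    linarith
  have hFk : κ * saturatedSq (x - ξ₀) ≤ F x * k :=
    (hF x).trans (le_mul_of_one_le_right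
      ((mul_nonneg hκ.le (saturatedSq_nonneg _)).trans (hF x)) hk1)
  have hgap : μ * κ ≤ μ * (1 / (1 + (x - ξ₀) ^ 2) + 2 * (F x * k) - μ * k ^ 2) := by
    gcongr
    linarith
  linear_combination hgap + κ * hμ

end RiccatiSupersolution

section Confinement

variable {c K R S ε s ρ : ℝ}

lemma mul_arctan_self_eq_abs (ρ : ℝ) : ρ * arctan ρ = |ρ| * arctan |ρ| := by
  rcases le_total 0 ρ with h | h
  · rw [abs_of_nonneg h]
  · rw [abs_of_nonpos h, arctan_neg, neg_mul_neg]

lemma mul_arctan_self_nonneg (ρ : ℝ) : 0 ≤ ρ * arctan ρ := by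
  rw [mul_arctan_self_eq_abs]
  exact mul_nonneg (abs_nonneg ρ) (arctan_nonneg.2 (abs_nonneg ρ))

lemma half_abs_le_mul_arctan_self (hρ : 1 ≤ |ρ|) : |ρ| / 2 ≤ ρ * arctan ρ := by
  have harctan : 1 / 2 ≤ arctan |ρ| := by
    have hmono := arctan_mono hρ
    rw [arctan_one] at hmono
    linarith [pi_gt_three]
  rw [mul_arctan_self_eq_abs, div_eq_mul_one_div]
  gcongr

lemma neg_nine_le_arctan_terms (s ρ : ℝ) :
    -9 ≤ arctan s / (1 + ρ ^ 2) - (arctan ρ * arctan s) ^ 2 := by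
  have hs := abs_arctan_le s
  have hsq : (arctan ρ * arctan s) ^ 2 ≤ (8 / 5 * (8 / 5)) ^ 2 := by
    rw [← sq_abs, abs_mul]
    gcongr
    exact abs_arctan_le ρ
  have hlin : -(8 / 5) ≤ arctan s / (1 + ρ ^ 2) := by
    rw [le_div_iff₀ (by positivity)]
    nlinarith [(abs_le.1 hs).1, sq_nonneg ρ]
  linarith

lemma mul_sq_le_mul_saturatedSq (hε : ε ^ 2 * K ≤ c / 2) (hs : K ≤ c * s ^ 2 / 2) :
    ε ^ 2 * K ≤ c * saturatedSq (ε * s) := by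
  rw [saturatedSq, mul_div_assoc', le_div_iff₀ (by positivity), mul_pow]
  nlinarith [sq_nonneg ε, mul_le_mul_of_nonneg_left hε (by positivity : 0 ≤ ε ^ 2 * s ^ 2),
    mul_le_mul_of_nonneg_left hs (sq_nonneg ε)]

lemma le_mul_arctan_self_div (hK : 1 ≤ K) (hs : s ^ 2 ≤ S) (hρ : 2 * (1 + S) * K ≤ |ρ|) :
    K ≤ ρ * arctan ρ / (1 + s ^ 2) := by
  have hρ1 : 1 ≤ |ρ| := by nlinarith [(sq_nonneg s).trans hs]
  rw [le_div_iff₀ (by positivity)]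
  nlinarith [half_abs_le_mul_arctan_self hρ1]

/- With `s = (ξ ρ - ξ₀) / ε` and `ds/dρ = ρ`, the bracket is `h' - h ^ 2` for
`h = arctan ρ * arctan s`. Far from the parabola `s = 0` the gap `c * saturatedSq (ε * s)` wins;
near it `s` varies so fast that `h'` wins for large `ρ`. -/
lemma confinement_lower_bound (hc : 0 < c) (hK : 0 ≤ K) (hε : ε ^ 2 * (K + 9) ≤ c / 2)
    (hR : 2 * (1 + 2 * (K + 9) / c) * (K + 9) ≤ R) (s ρ : ℝ) :
    ε ^ 2 * K - {r : ℝ | |r| < R}.indicator (fun _ => ε ^ 2 * (K + 9)) ρ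
      ≤ c * saturatedSq (ε * s) + ε ^ 2 * (arctan s / (1 + ρ ^ 2)
        + ρ * arctan ρ / (1 + s ^ 2) - (arctan ρ * arctan s) ^ 2) := by
  have hbounded := neg_nine_le_arctan_terms s ρ
  have hgap : 0 ≤ c * saturatedSq (ε * s) := mul_nonneg hc.le (saturatedSq_nonneg _)
  have htwist : 0 ≤ ρ * arctan ρ / (1 + s ^ 2) :=
    div_nonneg (mul_arctan_self_nonneg ρ) (by positivity)
  by_cases hρ : ρ ∈ {r : ℝ | |r| < R}
  · rw [indicator_of_mem hρ]
    nlinarith [sq_nonneg ε]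
  rw [indicator_of_notMem hρ, sub_zero]
  rcases le_total (2 * (K + 9) / c) (s ^ 2) with hfar | hnear
  · have hgap' : ε ^ 2 * (K + 9) ≤ c * saturatedSq (ε * s) := by
      refine mul_sq_le_mul_saturatedSq hε ?_
      rw [div_le_iff₀ hc] at hfar
      linarith
    nlinarith [sq_nonneg ε]
  · have htwist' := le_mul_arctan_self_div (by linarith : 1 ≤ K + 9) hnear
      (hR.trans (not_lt.1 hρ))
    nlinarith [sq_nonneg ε]

end Confinement

/-! ### Integration by parts on the half plane -/

section Divergence

variable {E : Type*} [NormedAddCommGroup E] {X : ℝ × ℝ → E}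

lemma hasCompactSupport_comp_prodMk_left (h : HasCompactSupport X) (ρ : ℝ) :
    HasCompactSupport fun τ => X (τ, ρ) :=
  h.comp_isClosedEmbedding <| Function.LeftInverse.isClosedEmbedding (f := Prod.fst) (fun _ => rfl)
    continuous_fst (by fun_prop)

lemma hasCompactSupport_comp_prodMk_right (h : HasCompactSupport X) (τ : ℝ) :
    HasCompactSupport fun ρ => X (τ, ρ) :=
  h.comp_isClosedEmbedding <| Function.LeftInverse.isClosedEmbedding (f := Prod.snd) (fun _ => rfl)
    continuous_snd (by fun_prop)

variable [NormedSpace ℝ E]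

lemma hasDerivAt_comp_prodMk_left {p : ℝ × ℝ} (h : DifferentiableAt ℝ X p) :
    HasDerivAt (fun τ => X (τ, p.2)) (fderiv ℝ X p (1, 0)) p.1 :=
  HasFDerivAt.comp_hasDerivAt (f := fun τ : ℝ => (τ, p.2)) p.1 h.hasFDerivAt
    ((hasDerivAt_id' p.1).prodMk (hasDerivAt_const _ _))

lemma hasDerivAt_comp_prodMk_right {p : ℝ × ℝ} (h : DifferentiableAt ℝ X p) :
    HasDerivAt (fun ρ => X (p.1, ρ)) (fderiv ℝ X p (0, 1)) p.2 :=
  HasFDerivAt.comp_hasDerivAt (f := fun ρ : ℝ => (p.1, ρ)) p.2 h.hasFDerivAt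
    ((hasDerivAt_const _ _).prodMk (hasDerivAt_id' p.2))

lemma integrable_fderiv_apply_of_hasCompactSupport (hX : ContDiff ℝ 1 X)
    (hc : HasCompactSupport X) (v : ℝ × ℝ) : Integrable fun p => fderiv ℝ X p v :=
  ((hX.continuous_fderiv one_ne_zero).clm_apply continuous_const).integrable_of_hasCompactSupport
    (hc.fderiv_apply (𝕜 := ℝ) v)

lemma measurableSet_halfPlane : MeasurableSet halfPlane :=
  measurableSet_Ioi.prod MeasurableSet.univ

lemma volume_restrict_halfPlane :
    volume.restrict halfPlane = (volume.restrict (Ioi (0 : ℝ))).prod (volume : Measure ℝ) := by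
  rw [halfPlane, Measure.volume_eq_prod, ← Measure.prod_restrict, Measure.restrict_univ]

lemma setIntegral_halfPlane_fderiv_snd (hX : ContDiff ℝ 1 X) (hc : HasCompactSupport X) :
    ∫ p in halfPlane, fderiv ℝ X p (0, 1) = 0 := by
  have hint := (integrable_fderiv_apply_of_hasCompactSupport hX hc (0, 1)).integrableOn
    (s := halfPlane)
  rw [IntegrableOn, volume_restrict_halfPlane] at hint
  rw [volume_restrict_halfPlane, integral_prod _ hint]
  refine integral_eq_zero_of_ae (.of_forall fun τ => ?_)
  have hslice : HasCompactSupport fun ρ => X (τ, ρ) := hasCompactSupport_comp_prodMk_right hc τ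
  have hderiv (ρ : ℝ) : HasDerivAt (fun ρ => X (τ, ρ)) (fderiv ℝ X (τ, ρ) (0, 1)) ρ :=
    hasDerivAt_comp_prodMk_right (p := (τ, ρ)) (hX.differentiable one_ne_zero _)
  refine integral_eq_zero_of_hasDerivAt_of_integrable hderiv ?_ ?_
  · rw [← funext fun ρ => (hderiv ρ).deriv]
    have hslice_contDiff : ContDiff ℝ 1 fun ρ => X (τ, ρ) := by fun_prop
    exact (hslice_contDiff.continuous_deriv le_rfl).integrable_of_hasCompactSupport hslice.deriv
  · exact (hX.continuous.comp (by fun_prop)).integrable_of_hasCompactSupport hslice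

variable [CompleteSpace E]

lemma setIntegral_halfPlane_fderiv_fst (hX : ContDiff ℝ 1 X) (hc : HasCompactSupport X) :
    ∫ p in halfPlane, fderiv ℝ X p (1, 0) = ∫ ρ, -X (0, ρ) := by
  have hint := (integrable_fderiv_apply_of_hasCompactSupport hX hc (1, 0)).integrableOn
    (s := halfPlane)
  rw [IntegrableOn, volume_restrict_halfPlane] at hint
  rw [volume_restrict_halfPlane, integral_prod_symm _ hint]
  congr 1 with ρ
  rw [← (hasCompactSupport_comp_prodMk_left hc ρ).integral_Ioi_deriv_eq (by fun_prop) 0]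
  congr 1 with τ
  exact (hasDerivAt_comp_prodMk_left (p := (τ, ρ)) (hX.differentiable one_ne_zero _)).deriv.symm

end Divergence

lemma setIntegral_halfPlane_div_nonpos {X Y : ℝ × ℝ → ℝ} (hX : ContDiff ℝ 1 X)
    (hY : ContDiff ℝ 1 Y) (hXc : HasCompactSupport X) (hYc : HasCompactSupport Y)
    (hX₀ : ∀ ρ, 0 ≤ X (0, ρ)) (b : ℝ) :
    ∫ p in halfPlane, (fderiv ℝ X p (1, 0) + b * fderiv ℝ Y p (0, 1)) ≤ 0 := by
  rw [integral_add (integrable_fderiv_apply_of_hasCompactSupport hX hXc _).integrableOn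
      ((integrable_fderiv_apply_of_hasCompactSupport hY hYc _).const_mul b).integrableOn,
    integral_const_mul, setIntegral_halfPlane_fderiv_fst hX hXc,
    setIntegral_halfPlane_fderiv_snd hY hYc, mul_zero, add_zero, integral_neg, neg_nonpos]
  exact integral_nonneg hX₀

/-! ### Weighted energy identities -/

section Flux

variable {W E : Type*} [NormedAddCommGroup W] [NormedSpace ℝ W] [NormedAddCommGroup E]
  [InnerProductSpace ℝ E] {u : W → E} {Φ g : W → ℝ}

open scoped RealInnerProductSpace

/-- The flux `Φ² (⟪u, ∂ᵥu⟫ + g ‖u‖²)` in the direction `v`, whose divergence carries the weighted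
energy estimates: `Φ` is the weight and `g` a solution of a Riccati inequality. -/
def weightedFlux (v : W) (Φ g : W → ℝ) (u : W → E) (p : W) : ℝ :=
  Φ p ^ 2 * (⟪u p, fderiv ℝ u p v⟫ + g p * ‖u p‖ ^ 2)

lemma contDiff_weightedFlux (hu : ContDiff ℝ 2 u) (hΦ : ContDiff ℝ 1 Φ) (hg : ContDiff ℝ 1 g)
    (v : W) : ContDiff ℝ 1 (weightedFlux v Φ g u) := by
  have hu₁ : ContDiff ℝ 1 u := hu.of_le one_le_two
  have hdu : ContDiff ℝ 1 fun p => fderiv ℝ u p v :=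
    (hu.fderiv_right (by norm_num)).clm_apply contDiff_const
  exact (hΦ.pow 2).mul ((hu₁.inner ℝ hdu).add (hg.mul (hu₁.norm_sq ℝ)))

lemma hasCompactSupport_weightedFlux (hΦ : HasCompactSupport Φ) (v : W) (g : W → ℝ) (u : W → E) :
    HasCompactSupport (weightedFlux v Φ g u) :=
  hΦ.mono fun p hp hΦp => hp (by simp [weightedFlux, hΦp])

lemma fderiv_weightedFlux (hu : ContDiff ℝ 2 u) {p : W} (hΦ : DifferentiableAt ℝ Φ p)
    (hg : DifferentiableAt ℝ g p) (v : W) :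
    fderiv ℝ (weightedFlux v Φ g u) p v =
      2 * Φ p * fderiv ℝ Φ p v * (⟪u p, fderiv ℝ u p v⟫ + g p * ‖u p‖ ^ 2) +
        Φ p ^ 2 * (⟪u p, fderiv ℝ (fun q => fderiv ℝ u q v) p v⟫ + ‖fderiv ℝ u p v‖ ^ 2 +
          fderiv ℝ g p v * ‖u p‖ ^ 2 + 2 * g p * ⟪u p, fderiv ℝ u p v⟫) := by
  have hu' : HasFDerivAt u (fderiv ℝ u p) p := (hu.differentiable two_ne_zero p).hasFDerivAt
  have hdu : ContDiff ℝ 1 fun p => fderiv ℝ u p v :=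
    (hu.fderiv_right (by norm_num)).clm_apply contDiff_const
  have hdu' := (hdu.differentiable one_ne_zero p).hasFDerivAt
  have hflux : HasFDerivAt (weightedFlux v Φ g u) _ p := (hΦ.hasFDerivAt.pow 2).mul
    ((hu'.inner ℝ hdu').add (hg.hasFDerivAt.mul hu'.norm_sq))
  rw [hflux.fderiv]
  simp only [smul_add, Nat.add_one_sub_one, pow_one, nsmul_eq_mul, Nat.cast_ofNat, add_apply,
    smul_apply, ContinuousLinearMap.comp_apply, ContinuousLinearMap.prod_apply,
    fderivInnerCLM_apply, inner_self_eq_norm_sq_to_K, ringHom_apply, smul_eq_mul,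
    coe_innerSL_apply]
  ring

-- The two sides differ by `‖Φ ∂ᵥu + (∂ᵥΦ + g Φ) u‖²`.
lemma picone_le_fderiv_weightedFlux (hu : ContDiff ℝ 2 u) {p : W} (hΦ : DifferentiableAt ℝ Φ p)
    (hg : DifferentiableAt ℝ g p) (v : W) :
    Φ p ^ 2 * (⟪u p, fderiv ℝ (fun q => fderiv ℝ u q v) p v⟫ +
        (fderiv ℝ g p v - g p ^ 2) * ‖u p‖ ^ 2) - fderiv ℝ Φ p v ^ 2 * ‖u p‖ ^ 2 ≤
      fderiv ℝ (weightedFlux v Φ g u) p v := by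
  have hsq := norm_add_sq_real (Φ p • fderiv ℝ u p v) ((fderiv ℝ Φ p v + g p * Φ p) • u p)
  simp only [real_inner_smul_right, real_inner_comm (u p), norm_smul, mul_pow, norm_eq_abs,
    sq_abs] at hsq
  rw [fderiv_weightedFlux hu hΦ hg]
  linarith [sq_nonneg ‖Φ p • fderiv ℝ u p v + (fderiv ℝ Φ p v + g p * Φ p) • u p‖]

-- The two sides differ by `‖Φ ∂ᵥu + 2 ∂ᵥΦ u‖²`.
lemma caccioppoli_le_fderiv_weightedFlux (hu : ContDiff ℝ 2 u) {p : W}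
    (hΦ : DifferentiableAt ℝ Φ p) (v : W) :
    Φ p ^ 2 * ‖fderiv ℝ u p v‖ ^ 2 +
        2 * Φ p ^ 2 * ⟪u p, fderiv ℝ (fun q => fderiv ℝ u q v) p v⟫ -
        4 * fderiv ℝ Φ p v ^ 2 * ‖u p‖ ^ 2 ≤
      2 * fderiv ℝ (weightedFlux v Φ 0 u) p v := by
  have hsq := norm_add_sq_real (Φ p • fderiv ℝ u p v) ((2 * fderiv ℝ Φ p v) • u p)
  simp only [real_inner_smul_right, real_inner_comm (u p), norm_smul, mul_pow, norm_eq_abs,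
    sq_abs] at hsq
  rw [fderiv_weightedFlux hu hΦ (by fun_prop : DifferentiableAt ℝ (0 : W → ℝ) p)]
  simp only [Pi.zero_apply, fderiv_zero, zero_apply]
  linarith [sq_nonneg ‖Φ p • fderiv ℝ u p v + (2 * fderiv ℝ Φ p v) • u p‖]

end Flux

/-! ### Agmon estimates for Neumann eigenfunctions -/

/-- The squared length of the gradient of `Φ` for the symbol of `-∂_τ² - b ∂_ρ²`; it measures the
error made by the weight `Φ`. -/
def gradSq (b : ℝ) (Φ : ℝ × ℝ → ℝ) (p : ℝ × ℝ) : ℝ :=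
  fderiv ℝ Φ p (1, 0) ^ 2 + b * fderiv ℝ Φ p (0, 1) ^ 2

/-- The potential `-(∂_τ²f + b ∂_ρ²f) / f` of a positive function `f` whose logarithmic derivatives
are `-g` in `τ` and `-h` in `ρ`. -/
def riccatiPotential (b : ℝ) (g h : ℝ × ℝ → ℝ) (p : ℝ × ℝ) : ℝ :=
  fderiv ℝ g p (1, 0) - g p ^ 2 + b * (fderiv ℝ h p (0, 1) - h p ^ 2)

lemma integrableOn_sq_mul_of_continuous {Φ : ℝ × ℝ → ℝ} (hΦ : Continuous Φ)
    (hΦc : HasCompactSupport Φ) {f : ℝ × ℝ → ℝ} (hf : Continuous f) :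
    IntegrableOn (fun p => Φ p ^ 2 * f p) halfPlane :=
  (((hΦ.pow 2).mul hf).integrable_of_hasCompactSupport
    (hΦc.comp_left (zero_pow two_ne_zero)).mul_right).integrableOn

section Agmon

variable {E : Type*} [NormedAddCommGroup E] [InnerProductSpace ℝ E]

/-- The energy density `|u|² + |∂_τu|² + b |∂_ρu|²`, whose exponential decay is to be proved. -/
def energyDensity (b : ℝ) (u : ℝ × ℝ → E) (p : ℝ × ℝ) : ℝ :=
  ‖u p‖ ^ 2 + ‖fderiv ℝ u p (1, 0)‖ ^ 2 + b * ‖fderiv ℝ u p (0, 1)‖ ^ 2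

lemma continuous_energyDensity {u : ℝ × ℝ → E} (hu : ContDiff ℝ 1 u) (b : ℝ) :
    Continuous (energyDensity b u) := by
  have := hu.continuous
  have := hu.continuous_fderiv one_ne_zero
  unfold energyDensity
  fun_prop

lemma energyDensity_nonneg {b : ℝ} (hb : 0 ≤ b) (u : ℝ × ℝ → E) (p : ℝ × ℝ) :
    0 ≤ energyDensity b u p := by
  unfold energyDensity
  positivity

/-- An `L²` eigenfunction, with eigenvalue `lam`, of `-∂_τ² - b ∂_ρ² + V` on the half plane with
Neumann boundary condition; values are taken in a real inner product space and `u = 0` is allowed.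
-/
structure IsNeumannEigenfunction (b : ℝ) (V : ℝ × ℝ → ℝ) (lam : ℝ) (u : ℝ × ℝ → E) : Prop where
  contDiff : ContDiff ℝ 2 u
  integrableOn_sq : IntegrableOn (fun p => ‖u p‖ ^ 2) halfPlane
  eigen : ∀ p ∈ halfPlane, fderiv ℝ (fun q => fderiv ℝ u q (1, 0)) p (1, 0) +
    b • fderiv ℝ (fun q => fderiv ℝ u q (0, 1)) p (0, 1) = (V p - lam) • u p
  neumann : ∀ ρ, fderiv ℝ u (0, ρ) (1, 0) = 0

namespace IsNeumannEigenfunction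

variable {b lam : ℝ} {V Φ g h : ℝ × ℝ → ℝ} {u : ℝ × ℝ → E}

open scoped RealInnerProductSpace

lemma inner_eigen (hu : IsNeumannEigenfunction b V lam u) {p : ℝ × ℝ} (hp : p ∈ halfPlane) :
    ⟪u p, fderiv ℝ (fun q => fderiv ℝ u q (1, 0)) p (1, 0)⟫ +
      b * ⟪u p, fderiv ℝ (fun q => fderiv ℝ u q (0, 1)) p (0, 1)⟫ = (V p - lam) * ‖u p‖ ^ 2 := by
  rw [← real_inner_smul_right, ← inner_add_right, hu.eigen p hp, real_inner_smul_right,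
    real_inner_self_eq_norm_sq]

lemma setIntegral_le_of_le_div (hu : IsNeumannEigenfunction b V lam u) (hΦ : ContDiff ℝ 1 Φ)
    (hΦc : HasCompactSupport Φ) (hg : ContDiff ℝ 1 g) (hh : ContDiff ℝ 1 h)
    (hg₀ : ∀ ρ, 0 ≤ g (0, ρ)) {P : ℝ × ℝ → ℝ} (hP : IntegrableOn P halfPlane) {c C : ℝ} (hc : 0 ≤ c)
    (hle : ∀ p ∈ halfPlane, P p ≤ c * (fderiv ℝ (weightedFlux (1, 0) Φ g u) p (1, 0) +
      b * fderiv ℝ (weightedFlux (0, 1) Φ h u) p (0, 1)) + C * ‖u p‖ ^ 2) :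
    ∫ p in halfPlane, P p ≤ C * ∫ p in halfPlane, ‖u p‖ ^ 2 := by
  set X := weightedFlux (1, 0) Φ g u with hXdef
  set Y := weightedFlux (0, 1) Φ h u
  have hX : ContDiff ℝ 1 X := contDiff_weightedFlux hu.contDiff hΦ hg _
  have hY : ContDiff ℝ 1 Y := contDiff_weightedFlux hu.contDiff hΦ hh _
  have hXc : HasCompactSupport X := hasCompactSupport_weightedFlux hΦc _ _ _
  have hYc : HasCompactSupport Y := hasCompactSupport_weightedFlux hΦc _ _ _
  have hX₀ (ρ : ℝ) : 0 ≤ X (0, ρ) := by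
    rw [hXdef, weightedFlux, hu.neumann, inner_zero_right, zero_add]
    have := hg₀ ρ
    positivity
  have hdiv : IntegrableOn (fun p => c * (fderiv ℝ X p (1, 0) + b * fderiv ℝ Y p (0, 1)))
      halfPlane :=
    ((integrable_fderiv_apply_of_hasCompactSupport hX hXc _).add
      ((integrable_fderiv_apply_of_hasCompactSupport hY hYc _).const_mul b)).const_mul c
      |>.integrableOn
  have hmass := hu.integrableOn_sq.const_mul C
  calc ∫ p in halfPlane, P p
      ≤ ∫ p in halfPlane, (c * (fderiv ℝ X p (1, 0) + b * fderiv ℝ Y p (0, 1)) +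
          C * ‖u p‖ ^ 2) :=
        setIntegral_mono_on hP (hdiv.fun_add hmass) measurableSet_halfPlane hle
    _ ≤ C * ∫ p in halfPlane, ‖u p‖ ^ 2 := by
        rw [integral_add hdiv hmass, integral_const_mul, integral_const_mul]
        exact add_le_of_nonpos_left (mul_nonpos_of_nonneg_of_nonpos hc
          (setIntegral_halfPlane_div_nonpos hX hY hXc hYc hX₀ b))

lemma picone_le_div (hu : IsNeumannEigenfunction b V lam u) (hb : 0 ≤ b) {p : ℝ × ℝ}
    (hp : p ∈ halfPlane) (hΦ : DifferentiableAt ℝ Φ p) (hg : DifferentiableAt ℝ g p)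
    (hh : DifferentiableAt ℝ h p) :
    (Φ p ^ 2 * (V p - lam + riccatiPotential b g h p) - gradSq b Φ p) * ‖u p‖ ^ 2 ≤
      fderiv ℝ (weightedFlux (1, 0) Φ g u) p (1, 0) +
        b * fderiv ℝ (weightedFlux (0, 1) Φ h u) p (0, 1) := by
  have hτ := picone_le_fderiv_weightedFlux hu.contDiff hΦ hg (1, 0)
  have hρ := picone_le_fderiv_weightedFlux hu.contDiff hΦ hh (0, 1)
  have heigen := congrArg (Φ p ^ 2 * ·) (hu.inner_eigen hp)
  simp only [riccatiPotential, gradSq] at heigen ⊢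
  linarith [mul_le_mul_of_nonneg_left hρ hb]

lemma caccioppoli_le_div (hu : IsNeumannEigenfunction b V lam u) (hb : 0 ≤ b) {p : ℝ × ℝ}
    (hp : p ∈ halfPlane) (hΦ : DifferentiableAt ℝ Φ p) :
    Φ p ^ 2 * (‖fderiv ℝ u p (1, 0)‖ ^ 2 + b * ‖fderiv ℝ u p (0, 1)‖ ^ 2) +
        (2 * Φ p ^ 2 * (V p - lam) - 4 * gradSq b Φ p) * ‖u p‖ ^ 2 ≤
      2 * (fderiv ℝ (weightedFlux (1, 0) Φ 0 u) p (1, 0) +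
        b * fderiv ℝ (weightedFlux (0, 1) Φ 0 u) p (0, 1)) := by
  have hτ := caccioppoli_le_fderiv_weightedFlux hu.contDiff hΦ (1, 0)
  have hρ := caccioppoli_le_fderiv_weightedFlux hu.contDiff hΦ (0, 1)
  have heigen := congrArg (2 * Φ p ^ 2 * ·) (hu.inner_eigen hp)
  simp only [gradSq] at heigen ⊢
  linarith [mul_le_mul_of_nonneg_left hρ hb]

lemma agmon_estimate (hu : IsNeumannEigenfunction b V lam u) (hb : 0 ≤ b)
    (hg : ContDiff ℝ 1 g) (hh : ContDiff ℝ 1 h) (hg₀ : ∀ ρ, 0 ≤ g (0, ρ)) {S : Set (ℝ × ℝ)}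
    {κ κ₁ Q M η : ℝ} (hQ : 0 ≤ Q)
    (hlower : ∀ p, κ₁ + κ - S.indicator (fun _ => Q) p ≤ V p - lam + riccatiPotential b g h p)
    (hΦ : ContDiff ℝ 1 Φ) (hΦc : HasCompactSupport Φ) (hM : 0 ≤ M)
    (hΦS : ∀ p ∈ S, Φ p ^ 2 ≤ M) (hgrad : ∀ p, gradSq b Φ p ≤ κ₁ * Φ p ^ 2 + η) :
    κ * ∫ p in halfPlane, Φ p ^ 2 * ‖u p‖ ^ 2 ≤ (Q * M + η) * ∫ p in halfPlane, ‖u p‖ ^ 2 := by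
  have hu_cont := hu.contDiff.continuous
  have hmass := integrableOn_sq_mul_of_continuous hΦ.continuous hΦc (f := fun p => ‖u p‖ ^ 2)
    (by fun_prop)
  rw [← integral_const_mul]
  refine hu.setIntegral_le_of_le_div hΦ hΦc hg hh hg₀ (hmass.const_mul κ) zero_le_one
    fun p hp => ?_
  have hindicator : Φ p ^ 2 * S.indicator (fun _ => Q) p ≤ Q * M := by
    by_cases hpS : p ∈ S
    · rw [indicator_of_mem hpS, mul_comm]
      exact mul_le_mul_of_nonneg_left (hΦS p hpS) hQ
    · rw [indicator_of_notMem hpS, mul_zero]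
      exact mul_nonneg hQ hM
  have hcoeff : κ * Φ p ^ 2 ≤
      Φ p ^ 2 * (V p - lam + riccatiPotential b g h p) - gradSq b Φ p + (Q * M + η) := by
    linarith [mul_le_mul_of_nonneg_left (hlower p) (sq_nonneg (Φ p)), hgrad p]
  have hpicone := hu.picone_le_div hb hp (hΦ.differentiable one_ne_zero p)
    (hg.differentiable one_ne_zero p) (hh.differentiable one_ne_zero p)
  linarith [mul_le_mul_of_nonneg_right hcoeff (sq_nonneg ‖u p‖)]

lemma weighted_energy_le (hu : IsNeumannEigenfunction b V lam u) (hb : 0 ≤ b) (hV : ∀ p, 0 ≤ V p)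
    {L κ₁ η : ℝ} (hL : lam ≤ L) (hΦ : ContDiff ℝ 1 Φ) (hΦc : HasCompactSupport Φ)
    (hgrad : ∀ p, gradSq b Φ p ≤ κ₁ * Φ p ^ 2 + η) :
    ∫ p in halfPlane, Φ p ^ 2 * energyDensity b u p ≤
      (1 + 4 * κ₁ + 2 * L) * (∫ p in halfPlane, Φ p ^ 2 * ‖u p‖ ^ 2) +
        4 * η * ∫ p in halfPlane, ‖u p‖ ^ 2 := by
  have hu_cont := hu.contDiff.continuous
  have henergy := integrableOn_sq_mul_of_continuous hΦ.continuous hΦc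
    (continuous_energyDensity (hu.contDiff.of_le one_le_two) b)
  have hmass := (integrableOn_sq_mul_of_continuous hΦ.continuous hΦc (f := fun p => ‖u p‖ ^ 2)
    (by fun_prop)).const_mul (1 + 4 * κ₁ + 2 * L)
  have hzero : ContDiff ℝ 1 (0 : ℝ × ℝ → ℝ) := contDiff_const
  rw [← sub_le_iff_le_add', ← integral_const_mul, ← integral_sub henergy hmass]
  refine hu.setIntegral_le_of_le_div hΦ hΦc hzero hzero (fun _ => le_rfl) (henergy.fun_sub hmass)
    zero_le_two fun p hp => ?_
  have hcoeff : 4 * gradSq b Φ p - 2 * Φ p ^ 2 * (V p - lam) ≤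
      4 * (κ₁ * Φ p ^ 2 + η) + 2 * Φ p ^ 2 * L := by
    nlinarith [hgrad p, hV p, hL, sq_nonneg (Φ p)]
  have hcacc := hu.caccioppoli_le_div hb hp (hΦ.differentiable one_ne_zero p)
  rw [energyDensity]
  linarith [mul_le_mul_of_nonneg_right hcoeff (sq_nonneg ‖u p‖)]

end IsNeumannEigenfunction

end Agmon

/-! ### Truncated hyperbolic weights -/

section TruncCosh

/-- The harmonic sum of `cosh (a y)` and `r`: a smooth weight bounded by `r` which tends to
`cosh (a y)` as `r → ∞` and whose logarithmic derivative never exceeds `|a|`. -/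
def truncCosh (a r y : ℝ) : ℝ :=
  cosh (a * y) / (1 + cosh (a * y) / r)

variable {r : ℝ}

lemma one_le_one_add_cosh_div (hr : 0 < r) (x : ℝ) : 1 ≤ 1 + cosh x / r :=
  le_add_of_nonneg_right (div_nonneg (cosh_pos x).le hr.le)

lemma truncCosh_nonneg (hr : 0 < r) (a y : ℝ) : 0 ≤ truncCosh a r y :=
  div_nonneg (cosh_pos _).le (zero_le_one.trans (one_le_one_add_cosh_div hr _))

lemma truncCosh_le (hr : 0 < r) (a y : ℝ) : truncCosh a r y ≤ r := by
  rw [truncCosh, div_le_iff₀ (zero_lt_one.trans_le (one_le_one_add_cosh_div hr _)), mul_add,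
    mul_one, mul_div_cancel₀ _ hr.ne']
  exact le_add_of_nonneg_left hr.le

lemma truncCosh_le_cosh (hr : 0 < r) (a y : ℝ) : truncCosh a r y ≤ cosh (a * y) :=
  div_le_self (cosh_pos _).le (one_le_one_add_cosh_div hr _)

lemma contDiff_truncCosh (hr : 0 < r) (a : ℝ) : ContDiff ℝ 1 (truncCosh a r) := by
  have hcosh : ContDiff ℝ 1 fun y => cosh (a * y) := contDiff_cosh.comp (by fun_prop)
  exact hcosh.div (contDiff_const.add (hcosh.div_const r)) fun y =>
    (zero_lt_one.trans_le (one_le_one_add_cosh_div hr _)).ne'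

lemma hasDerivAt_truncCosh (hr : 0 < r) (a y : ℝ) :
    HasDerivAt (truncCosh a r) (a * sinh (a * y) / (1 + cosh (a * y) / r) ^ 2) y := by
  have hcosh : HasDerivAt (fun y => cosh (a * y)) (sinh (a * y) * (a * 1)) y :=
    ((hasDerivAt_id' y).const_mul a).cosh
  refine (hcosh.div ((hcosh.div_const r).const_add 1)
    (zero_lt_one.trans_le (one_le_one_add_cosh_div hr _)).ne').congr_deriv ?_
  congr 1
  ring

lemma sq_deriv_truncCosh_le (hr : 0 < r) (a y : ℝ) :
    deriv (truncCosh a r) y ^ 2 ≤ a ^ 2 * truncCosh a r y ^ 2 := by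
  have hden := one_le_one_add_cosh_div hr (a * y)
  have hsinh : sinh (a * y) ^ 2 ≤ cosh (a * y) ^ 2 := by linarith [cosh_sq (a * y)]
  rw [(hasDerivAt_truncCosh hr a y).deriv, truncCosh]
  set d := 1 + cosh (a * y) / r
  calc (a * sinh (a * y) / d ^ 2) ^ 2 = a ^ 2 * (sinh (a * y) ^ 2 / (d ^ 2) ^ 2) := by
        rw [div_pow, mul_pow, mul_div_assoc]
    _ ≤ a ^ 2 * (cosh (a * y) ^ 2 / d ^ 2) := by
        gcongr
        exact le_self_pow₀ hden two_ne_zero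
    _ = a ^ 2 * (cosh (a * y) / d) ^ 2 := by rw [div_pow]

lemma tendsto_truncCosh (a y : ℝ) :
    Tendsto (fun r => truncCosh a r y) atTop (𝓝 (cosh (a * y))) := by
  have hden : Tendsto (fun r => 1 + cosh (a * y) / r) atTop (𝓝 (1 + 0)) :=
    tendsto_const_nhds.add (tendsto_const_nhds.div_atTop tendsto_id)
  have hquot : Tendsto (fun r => truncCosh a r y) atTop (𝓝 (cosh (a * y) / (1 + 0))) :=
    tendsto_const_nhds.div hden (by norm_num)
  rwa [add_zero, div_one] at hquot

end TruncCosh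

section CutoffWeight

variable (χ : ContDiffBump (0 : ℝ × ℝ)) (a : ℝ) {r : ℝ}

/-- The compactly supported Agmon weight `truncCosh a r ρ · χ (p / r²)`. The truncated hyperbolic
cosine is at most `r`, so cutting off at scale `r²` costs a gradient of size `1 / r` only. -/
def cutoffWeight (r : ℝ) (p : ℝ × ℝ) : ℝ :=
  truncCosh a r p.2 * χ ((r ^ 2)⁻¹ • p)

lemma contDiff_cutoffWeight (hr : 0 < r) : ContDiff ℝ 1 (cutoffWeight χ a r) :=
  ((contDiff_truncCosh hr a).comp contDiff_snd).mul
    (χ.contDiff.comp (contDiff_const_smul (r ^ 2)⁻¹))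

lemma hasCompactSupport_cutoffWeight (hr : 0 < r) : HasCompactSupport (cutoffWeight χ a r) :=
  (χ.hasCompactSupport.comp_smul (inv_ne_zero (pow_ne_zero 2 hr.ne'))).mul_left

lemma cutoffWeight_sq_le (hr : 0 < r) (p : ℝ × ℝ) :
    cutoffWeight χ a r p ^ 2 ≤ cosh (a * p.2) ^ 2 := by
  have htrunc := truncCosh_nonneg hr a p.2
  refine pow_le_pow_left₀ (mul_nonneg htrunc χ.nonneg) ?_ 2
  exact (mul_le_of_le_one_right htrunc χ.le_one).trans (truncCosh_le_cosh hr a p.2)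

lemma fderiv_cutoffWeight_apply (hr : 0 < r) (p v : ℝ × ℝ) :
    fderiv ℝ (cutoffWeight χ a r) p v =
      deriv (truncCosh a r) p.2 * v.2 * χ ((r ^ 2)⁻¹ • p) +
        truncCosh a r p.2 * ((r ^ 2)⁻¹ * fderiv ℝ χ ((r ^ 2)⁻¹ • p) v) := by
  have htrunc : HasFDerivAt (fun p : ℝ × ℝ => truncCosh a r p.2)
      (deriv (truncCosh a r) p.2 • ContinuousLinearMap.snd ℝ ℝ ℝ) p :=
    (hasDerivAt_truncCosh hr a p.2).differentiableAt.hasDerivAt.comp_hasFDerivAt p hasFDerivAt_snd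
  have hχ : HasFDerivAt (fun p : ℝ × ℝ => χ ((r ^ 2)⁻¹ • p))
      ((fderiv ℝ χ ((r ^ 2)⁻¹ • p)).comp ((r ^ 2)⁻¹ • ContinuousLinearMap.id ℝ (ℝ × ℝ))) p :=
    HasFDerivAt.comp (g := χ) p
      ((χ.contDiff (n := 1)).differentiable one_ne_zero ((r ^ 2)⁻¹ • p)).hasFDerivAt
      ((hasFDerivAt_id p).const_smul (r ^ 2)⁻¹)
  have hmul : HasFDerivAt (cutoffWeight χ a r) _ p := htrunc.mul hχ
  rw [hmul.fderiv]
  simp only [ContinuousLinearMap.comp_smulₛₗ, map_inv₀, ringHom_apply,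
    ContinuousLinearMap.comp_id, add_apply, smul_apply, smul_eq_mul,
    ContinuousLinearMap.coe_snd']
  ring

lemma sq_fderiv_cutoffWeight_le (hr : 0 < r) {D : ℝ} (hD : ∀ p, ‖fderiv ℝ χ p‖ ≤ D)
    (p v : ℝ × ℝ) :
    fderiv ℝ (cutoffWeight χ a r) p v ^ 2 ≤
      2 * (a ^ 2 * v.2 ^ 2 * cutoffWeight χ a r p ^ 2 + D ^ 2 * ‖v‖ ^ 2 / r ^ 2) := by
  rw [fderiv_cutoffWeight_apply χ a hr]
  refine add_sq_le.trans (mul_le_mul_of_nonneg_left (add_le_add ?_ ?_) zero_le_two)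
  · rw [cutoffWeight]
    set q := (r ^ 2)⁻¹ • p
    calc (deriv (truncCosh a r) p.2 * v.2 * χ q) ^ 2
        = deriv (truncCosh a r) p.2 ^ 2 * (v.2 * χ q) ^ 2 := by ring
      _ ≤ a ^ 2 * truncCosh a r p.2 ^ 2 * (v.2 * χ q) ^ 2 := by
          gcongr
          exact sq_deriv_truncCosh_le hr a p.2
      _ = a ^ 2 * v.2 ^ 2 * (truncCosh a r p.2 * χ q) ^ 2 := by ring
  · have hχv : |fderiv ℝ χ ((r ^ 2)⁻¹ • p) v| ≤ D * ‖v‖ :=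
      (fderiv ℝ χ ((r ^ 2)⁻¹ • p)).le_of_opNorm_le (hD _) v
    have htrunc := truncCosh_nonneg hr a p.2
    calc (truncCosh a r p.2 * ((r ^ 2)⁻¹ * fderiv ℝ χ ((r ^ 2)⁻¹ • p) v)) ^ 2
        = truncCosh a r p.2 ^ 2 * ((r ^ 2)⁻¹ ^ 2 * |fderiv ℝ χ ((r ^ 2)⁻¹ • p) v| ^ 2) := by
          rw [sq_abs]; ring
      _ ≤ r ^ 2 * ((r ^ 2)⁻¹ ^ 2 * (D * ‖v‖) ^ 2) := by
          gcongr
          exact truncCosh_le hr a p.2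
      _ = D ^ 2 * ‖v‖ ^ 2 / r ^ 2 := by field_simp

lemma tendsto_cutoffWeight (p : ℝ × ℝ) :
    Tendsto (fun r => cutoffWeight χ a r p) atTop (𝓝 (cosh (a * p.2))) := by
  have hscale : Tendsto (fun r : ℝ => (r ^ 2)⁻¹ • p) atTop (𝓝 ((0 : ℝ) • p)) :=
    ((tendsto_pow_atTop two_ne_zero).inv_tendsto_atTop).smul_const p
  have hχ := (χ.continuous.tendsto _).comp hscale
  rw [zero_smul, χ.eventuallyEq_one.eq_of_nhds] at hχ
  simpa [cutoffWeight] using (tendsto_truncCosh a p.2).mul hχ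

lemma gradSq_cutoffWeight_le (hr : 0 < r) {b : ℝ} (hb : 0 ≤ b) {D : ℝ}
    (hD : ∀ p, ‖fderiv ℝ χ p‖ ≤ D) (p : ℝ × ℝ) :
    gradSq b (cutoffWeight χ a r) p ≤
      2 * a ^ 2 * b * cutoffWeight χ a r p ^ 2 + 2 * (1 + b) * D ^ 2 / r ^ 2 := by
  have hτ := sq_fderiv_cutoffWeight_le χ a hr hD p (1, 0)
  have hρ := mul_le_mul_of_nonneg_left (sq_fderiv_cutoffWeight_le χ a hr hD p (0, 1)) hb
  simp only [Prod.norm_mk, norm_one, norm_zero, max_eq_left zero_le_one,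
    max_eq_right zero_le_one] at hτ hρ
  rw [gradSq]
  refine (add_le_add hτ hρ).trans_eq ?_
  ring

end CutoffWeight

/-! ### Passage to the limit in the weights -/

lemma lintegral_ofReal_le_of_tendsto {α : Type*} [MeasurableSpace α] {μ : Measure α}
    {f : ℕ → α → ℝ} {f' : α → ℝ} {C : ℕ → ℝ} {C' : ℝ} (hf : ∀ n, Integrable (f n) μ)
    (hf₀ : ∀ n x, 0 ≤ f n x) (hlim : ∀ x, Tendsto (fun n => f n x) atTop (𝓝 (f' x)))
    (hle : ∀ n, ∫ x, f n x ∂μ ≤ C n) (hC : Tendsto C atTop (𝓝 C')) :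
    ∫⁻ x, ENNReal.ofReal (f' x) ∂μ ≤ ENNReal.ofReal C' := by
  calc ∫⁻ x, ENNReal.ofReal (f' x) ∂μ
      = ∫⁻ x, liminf (fun n => ENNReal.ofReal (f n x)) atTop ∂μ :=
        lintegral_congr fun x => ((ENNReal.tendsto_ofReal (hlim x)).liminf_eq).symm
    _ ≤ liminf (fun n => ∫⁻ x, ENNReal.ofReal (f n x) ∂μ) atTop :=
        lintegral_liminf_le' fun n => (hf n).aemeasurable.ennreal_ofReal
    _ ≤ liminf (fun n => ENNReal.ofReal (C n)) atTop :=
        liminf_le_liminf <| .of_forall fun n => by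
          rw [← ofReal_integral_eq_lintegral_ofReal (hf n) (.of_forall (hf₀ n))]
          exact ENNReal.ofReal_le_ofReal (hle n)
    _ = ENNReal.ofReal C' := (ENNReal.tendsto_ofReal hC).liminf_eq

section Localization

variable {E : Type*} [NormedAddCommGroup E] [InnerProductSpace ℝ E] {b lam L a R Q r D : ℝ}
  {V g h : ℝ × ℝ → ℝ} {u : ℝ × ℝ → E}

lemma IsNeumannEigenfunction.cutoffWeight_energy_le (hu : IsNeumannEigenfunction b V lam u)
    (hb : 0 < b) (hV : ∀ p, 0 ≤ V p) (hL₀ : 0 ≤ L) (hL : lam ≤ L) (hg : ContDiff ℝ 1 g)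
    (hh : ContDiff ℝ 1 h) (hg₀ : ∀ ρ, 0 ≤ g (0, ρ)) (hQ : 0 ≤ Q)
    (hlower : ∀ p, 2 * a ^ 2 * b + b - {p : ℝ × ℝ | |p.2| < R}.indicator (fun _ => b * Q) p ≤
      V p - lam + riccatiPotential b g h p)
    (χ : ContDiffBump (0 : ℝ × ℝ)) (hD : ∀ p, ‖fderiv ℝ χ p‖ ≤ D) (hr : 0 < r) :
    ∫ p in halfPlane, cutoffWeight χ a r p ^ 2 * energyDensity b u p ≤
      ((1 + 8 * a ^ 2 * b + 2 * L) * (Q * cosh (a * R) ^ 2 + 2 * (1 + b) * D ^ 2 / r ^ 2 / b) +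
        4 * (2 * (1 + b) * D ^ 2 / r ^ 2)) * ∫ p in halfPlane, ‖u p‖ ^ 2 := by
  set Φ := cutoffWeight χ a r
  set η := 2 * (1 + b) * D ^ 2 / r ^ 2
  have hΦ : ContDiff ℝ 1 Φ := contDiff_cutoffWeight χ a hr
  have hΦc : HasCompactSupport Φ := hasCompactSupport_cutoffWeight χ a hr
  have hgrad := gradSq_cutoffWeight_le χ a hr hb.le hD
  have hstrip (p : ℝ × ℝ) (hp : |p.2| < R) : Φ p ^ 2 ≤ cosh (a * R) ^ 2 := by
    refine (cutoffWeight_sq_le χ a hr p).trans (pow_le_pow_left₀ (cosh_pos _).le ?_ 2)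
    rw [cosh_le_cosh, abs_mul, abs_mul]
    exact mul_le_mul_of_nonneg_left (hp.le.trans (le_abs_self R)) (abs_nonneg a)
  have hagmon := hu.agmon_estimate hb.le hg hh hg₀ (mul_nonneg hb.le hQ) hlower hΦ hΦc
    (sq_nonneg (cosh (a * R))) hstrip hgrad
  have hmass : ∫ p in halfPlane, Φ p ^ 2 * ‖u p‖ ^ 2 ≤
      (Q * cosh (a * R) ^ 2 + η / b) * ∫ p in halfPlane, ‖u p‖ ^ 2 := by
    have hscale : b * (Q * cosh (a * R) ^ 2 + η / b) = b * Q * cosh (a * R) ^ 2 + η := by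
      field_simp
    refine le_of_mul_le_mul_left (hagmon.trans_eq ?_) hb
    rw [← mul_assoc, hscale]
  have henergy := hu.weighted_energy_le hb.le hV hL hΦ hΦc hgrad
  have hcoeff : 0 ≤ 1 + 8 * a ^ 2 * b + 2 * L := by positivity
  linarith [mul_le_mul_of_nonneg_left hmass hcoeff]

lemma IsNeumannEigenfunction.lintegral_cosh_sq_le (hu : IsNeumannEigenfunction b V lam u)
    (hb : 0 < b) (hV : ∀ p, 0 ≤ V p) (hL₀ : 0 ≤ L) (hL : lam ≤ L) (hg : ContDiff ℝ 1 g)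
    (hh : ContDiff ℝ 1 h) (hg₀ : ∀ ρ, 0 ≤ g (0, ρ)) (hQ : 0 ≤ Q)
    (hlower : ∀ p, 2 * a ^ 2 * b + b - {p : ℝ × ℝ | |p.2| < R}.indicator (fun _ => b * Q) p ≤
      V p - lam + riccatiPotential b g h p) :
    ∫⁻ p in halfPlane, ENNReal.ofReal (cosh (a * p.2) ^ 2 * energyDensity b u p) ≤
      ENNReal.ofReal ((1 + 8 * a ^ 2 * b + 2 * L) * (Q * cosh (a * R) ^ 2) *
        ∫ p in halfPlane, ‖u p‖ ^ 2) := by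
  let χ : ContDiffBump (0 : ℝ × ℝ) := default
  obtain ⟨D, hD⟩ := (χ.hasCompactSupport.fderiv (𝕜 := ℝ)).exists_bound_of_continuous
    ((χ.contDiff (n := 1)).continuous_fderiv one_ne_zero)
  have hr (n : ℕ) : 0 < (n : ℝ) + 1 := n.cast_add_one_pos
  have hr_lim : Tendsto (fun n : ℕ => (n : ℝ) + 1) atTop atTop :=
    tendsto_atTop_add_const_right _ _ tendsto_natCast_atTop_atTop
  have hη : Tendsto (fun n : ℕ => 2 * (1 + b) * D ^ 2 / ((n : ℝ) + 1) ^ 2) atTop (𝓝 0) :=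
    tendsto_const_nhds.div_atTop ((tendsto_pow_atTop two_ne_zero).comp hr_lim)
  have hbound := ((((hη.div_const b).const_add (Q * cosh (a * R) ^ 2)).const_mul
    (1 + 8 * a ^ 2 * b + 2 * L)).add (hη.const_mul 4)).mul_const (∫ p in halfPlane, ‖u p‖ ^ 2)
  rw [zero_div, mul_zero, add_zero, add_zero] at hbound
  exact lintegral_ofReal_le_of_tendsto
    (fun n => integrableOn_sq_mul_of_continuous (contDiff_cutoffWeight χ a (hr n)).continuous
      (hasCompactSupport_cutoffWeight χ a (hr n))
      (continuous_energyDensity (hu.contDiff.of_le one_le_two) b))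
    (fun n p => mul_nonneg (sq_nonneg _) (energyDensity_nonneg hb.le u p))
    (fun p => (((tendsto_cutoffWeight χ a p).comp hr_lim).pow 2).mul_const _)
    (fun n => hu.cutoffWeight_energy_le hb hV hL₀ hL hg hh hg₀ hQ hlower χ hD (hr n)) hbound

end Localization

/-! ### The model operator -/

/-- The momentum `ξ(ρ) = δ + ε ρ² / 2` of the de Gennes operator in `τ` obtained by freezing `ρ`. -/
def sliceMomentum (ε δ ρ : ℝ) : ℝ := δ + ε * ρ ^ 2 / 2

/-- The potential of `-∂_τ² - ε² ∂_ρ² + (τ + ξ(ρ))²`, which is `Q_m(B)` when `ε = B^{-1/6}` and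
`δ = (m - B/2) / √B`. -/
def modelPotential (ε δ : ℝ) (p : ℝ × ℝ) : ℝ := (p.1 + sliceMomentum ε δ p.2) ^ 2

section Supersolution

variable {κ ξ₀ ε K R : ℝ} {F : ℝ → ℝ}

/-- The logarithmic derivative in `τ` (up to sign) of the supersolution of the model operator. -/
def transverseRiccati (κ ξ₀ : ℝ) (F : ℝ → ℝ) (ε δ : ℝ) (p : ℝ × ℝ) : ℝ :=
  perturbedRiccati κ ξ₀ F (sliceMomentum ε δ p.2) (p.1 + sliceMomentum ε δ p.2)

/-- The logarithmic derivative in `ρ` (up to sign) of the supersolution of the model operator; the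
argument of the second `arctan` is the rescaled distance to the parabola `ξ(ρ) = ξ₀`. -/
def confiningRiccati (ξ₀ ε δ : ℝ) (p : ℝ × ℝ) : ℝ :=
  arctan p.2 * arctan ((sliceMomentum ε δ p.2 - ξ₀) / ε)

lemma hasDerivAt_sliceMomentum (ε δ ρ : ℝ) : HasDerivAt (sliceMomentum ε δ) (ε * ρ) ρ :=
  ((((hasDerivAt_id' ρ).pow 2).const_mul ε).div_const 2 |>.const_add δ).congr_deriv (by simp; ring)

lemma contDiff_sliceMomentum (ε δ : ℝ) : ContDiff ℝ 1 (sliceMomentum ε δ) := by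
  unfold sliceMomentum
  fun_prop

lemma contDiff_transverseRiccati (hF : ContDiff ℝ 1 F) (κ ξ₀ ε δ : ℝ) :
    ContDiff ℝ 1 (transverseRiccati κ ξ₀ F ε δ) := by
  have hξ : ContDiff ℝ 1 fun p : ℝ × ℝ => sliceMomentum ε δ p.2 :=
    (contDiff_sliceMomentum ε δ).comp contDiff_snd
  exact (contDiff_perturbedRiccati hF κ ξ₀).comp (hξ.prodMk (contDiff_fst.add hξ))

lemma contDiff_confiningRiccati (ξ₀ ε δ : ℝ) : ContDiff ℝ 1 (confiningRiccati ξ₀ ε δ) := by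
  have hξ : ContDiff ℝ 1 fun p : ℝ × ℝ => sliceMomentum ε δ p.2 :=
    (contDiff_sliceMomentum ε δ).comp contDiff_snd
  exact (contDiff_arctan.comp contDiff_snd).mul
    (contDiff_arctan.comp ((hξ.sub contDiff_const).div_const ε))

lemma fderiv_transverseRiccati_fst (hF : ContDiff ℝ 1 F) (κ ξ₀ ε δ : ℝ) (p : ℝ × ℝ) :
    fderiv ℝ (transverseRiccati κ ξ₀ F ε δ) p (1, 0) =
      deriv (perturbedRiccati κ ξ₀ F (sliceMomentum ε δ p.2)) (p.1 + sliceMomentum ε δ p.2) := by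
  rw [← (hasDerivAt_comp_prodMk_left
    ((contDiff_transverseRiccati hF κ ξ₀ ε δ).differentiable one_ne_zero p)).deriv]
  exact deriv_comp_add_const (perturbedRiccati κ ξ₀ F (sliceMomentum ε δ p.2))
    (sliceMomentum ε δ p.2) p.1

lemma fderiv_confiningRiccati_snd (hε : ε ≠ 0) (ξ₀ δ : ℝ) (p : ℝ × ℝ) :
    fderiv ℝ (confiningRiccati ξ₀ ε δ) p (0, 1) =
      arctan ((sliceMomentum ε δ p.2 - ξ₀) / ε) / (1 + p.2 ^ 2) +
        p.2 * arctan p.2 / (1 + ((sliceMomentum ε δ p.2 - ξ₀) / ε) ^ 2) := by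
  have hs : HasDerivAt (fun ρ => (sliceMomentum ε δ ρ - ξ₀) / ε) p.2 p.2 :=
    (((hasDerivAt_sliceMomentum ε δ p.2).sub_const ξ₀).div_const ε).congr_deriv
      (mul_div_cancel_left₀ _ hε)
  have hh : HasDerivAt (fun ρ => confiningRiccati ξ₀ ε δ (p.1, ρ)) _ p.2 :=
    (hasDerivAt_arctan p.2).mul hs.arctan
  rw [(hasDerivAt_comp_prodMk_right
    ((contDiff_confiningRiccati ξ₀ ε δ).differentiable one_ne_zero p)).unique hh]
  ring

lemma IsGroundStateRiccati.le_modelPotential_add_riccatiPotential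
    (hF : IsGroundStateRiccati ξ₀ F) (hκ : 0 < κ) (hκ' : κ ≤ 1 / 2)
    (hle : ∀ x, κ * saturatedSq (x - ξ₀) ≤ F x)
    (hε : 0 < ε) (hK : 0 ≤ K) (hεK : ε ^ 2 * (K + 9) ≤ κ ^ 3 / 25 / 2)
    (hR : 2 * (1 + 2 * (K + 9) / (κ ^ 3 / 25)) * (K + 9) ≤ R) (δ : ℝ) (p : ℝ × ℝ) :
    ξ₀ ^ 2 + ε ^ 2 * K - {p : ℝ × ℝ | |p.2| < R}.indicator (fun _ => ε ^ 2 * (K + 9)) p ≤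
      modelPotential ε δ p +
        riccatiPotential (ε ^ 2) (transverseRiccati κ ξ₀ F ε δ) (confiningRiccati ξ₀ ε δ) p := by
  have hgap := le_deriv_perturbedRiccati_sub_sq hκ hκ' hle
    (hF.hasDerivAt (p.1 + sliceMomentum ε δ p.2)) (sliceMomentum ε δ p.2)
  have hconf := confinement_lower_bound (by positivity) hK hεK hR
    ((sliceMomentum ε δ p.2 - ξ₀) / ε) p.2
  rw [mul_div_cancel₀ _ hε.ne'] at hconf
  rw [riccatiPotential, fderiv_transverseRiccati_fst hF.contDiff,
    fderiv_confiningRiccati_snd hε.ne', modelPotential, transverseRiccati, confiningRiccati]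
  change _ - {r : ℝ | |r| < R}.indicator (fun _ => ε ^ 2 * (K + 9)) p.2 ≤ _
  linarith

lemma exists_riccatiPotential_lower_bound (hK : 0 ≤ K) :
    ∃ R, ∃ ε₀ > 0, ∀ ε, 0 < ε → ε ≤ ε₀ → ∀ δ, ∃ g h : ℝ × ℝ → ℝ,
      ContDiff ℝ 1 g ∧ ContDiff ℝ 1 h ∧ (∀ ρ, 0 ≤ g (0, ρ)) ∧
      ∀ p, Theta0 + ε ^ 2 * K -
          {p : ℝ × ℝ | |p.2| < R}.indicator (fun _ => ε ^ 2 * (K + 9)) p ≤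
        modelPotential ε δ p + riccatiPotential (ε ^ 2) g h p := by
  obtain ⟨ξ₀, F, hF, hTheta⟩ := exists_isGroundStateRiccati
  obtain ⟨hξ₀, hξ₀'⟩ := hF.mem_Ioo
  set κ := -ξ₀ / 3 with hκ_def
  have hκ : 0 < κ := by linarith
  have hκ' : κ ≤ 1 / 2 := by linarith
  refine ⟨2 * (1 + 2 * (K + 9) / (κ ^ 3 / 25)) * (K + 9), √(κ ^ 3 / 25 / 2 / (K + 9)),
    by positivity, fun ε hε hε₀ δ => ⟨transverseRiccati κ ξ₀ F ε δ, confiningRiccati ξ₀ ε δ,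
      contDiff_transverseRiccati hF.contDiff κ ξ₀ ε δ, contDiff_confiningRiccati ξ₀ ε δ,
      fun ρ => ?_, fun p => ?_⟩⟩
  · rw [transverseRiccati, zero_add]
    exact perturbedRiccati_self_nonneg hκ hκ' hF.mul_saturatedSq_le _
  · have hεK : ε ^ 2 * (K + 9) ≤ κ ^ 3 / 25 / 2 := by
      rwa [← le_div_iff₀ (by linarith), ← le_sqrt hε.le (by positivity)]
    linarith [hF.le_modelPotential_add_riccatiPotential hκ hκ' hF.mul_saturatedSq_le hε hK hεK
      le_rfl δ p]

lemma Theta0_le_one : Theta0 ≤ 1 := by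
  obtain ⟨ξ₀, F, hF, hTheta⟩ := exists_isGroundStateRiccati
  obtain ⟨hξ₀, hξ₀'⟩ := hF.mem_Ioo
  nlinarith

end Supersolution

section Conclusion

lemma exp_two_mul_abs_le_cosh_sq (a y : ℝ) : exp (2 * a * |y|) ≤ 4 * cosh (a * y) ^ 2 := by
  have hle : exp (a * |y|) ≤ 2 * cosh (a * y) := by
    rw [← cosh_abs, abs_mul, cosh_eq]
    have hexp : exp (a * |y|) ≤ exp (|a| * |y|) := by gcongr; exact le_abs_self a
    linarith [exp_pos (-(|a| * |y|))]
  calc exp (2 * a * |y|) = exp (a * |y|) ^ 2 := by rw [← exp_nat_mul]; push_cast; ring_nf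
    _ ≤ (2 * cosh (a * y)) ^ 2 := by gcongr
    _ = 4 * cosh (a * y) ^ 2 := by ring

variable {E : Type*} [NormedAddCommGroup E] [InnerProductSpace ℝ E]

lemma exists_lintegral_exp_le (ω a : ℝ) :
    ∃ ε₀ C : ℝ, 0 < ε₀ ∧ 0 < C ∧ ∀ ε, 0 < ε → ε ≤ ε₀ → ∀ (δ lam : ℝ) (u : ℝ × ℝ → E),
      IsNeumannEigenfunction (ε ^ 2) (modelPotential ε δ) lam u → lam ≤ Theta0 + ω * ε ^ 2 →
      ∫⁻ p in halfPlane, ENNReal.ofReal (exp (2 * a * |p.2|) * energyDensity (ε ^ 2) u p) ≤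
        ENNReal.ofReal (C * ∫ p in halfPlane, ‖u p‖ ^ 2) := by
  set K := |ω| + 2 * a ^ 2 + 1
  have hK : 0 ≤ K := by positivity
  obtain ⟨R, ε₁, hε₁, hsuper⟩ := exists_riccatiPotential_lower_bound hK
  set C := (1 + 8 * a ^ 2 + 2 * (1 + |ω|)) * ((K + 9) * cosh (a * R) ^ 2)
  refine ⟨min ε₁ 1, 4 * C, by positivity, by have := cosh_pos (a * R); positivity,
    fun ε hε hε₀ δ lam u hu hlam => ?_⟩
  obtain ⟨hεε₁, hε1⟩ := le_min_iff.1 hε₀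
  obtain ⟨g, h, hg, hh, hg₀, hlower⟩ := hsuper ε hε hεε₁ δ
  have hε2 : ε ^ 2 ≤ 1 := pow_le_one₀ hε.le hε1
  have hω : ω * ε ^ 2 ≤ |ω| * ε ^ 2 := by gcongr; exact le_abs_self ω
  have hω' : |ω| * ε ^ 2 ≤ |ω| := mul_le_of_le_one_right (abs_nonneg ω) hε2
  have hcosh := hu.lintegral_cosh_sq_le (a := a) (L := 1 + |ω|) (by positivity)
    (fun p => sq_nonneg _) (by positivity) (by linarith [Theta0_le_one]) hg hh hg₀
    (by linarith : 0 ≤ K + 9) fun p => by linarith [hlower p]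
  have hmass : 0 ≤ ∫ p in halfPlane, ‖u p‖ ^ 2 := integral_nonneg fun p => sq_nonneg _
  calc ∫⁻ p in halfPlane, ENNReal.ofReal (exp (2 * a * |p.2|) * energyDensity (ε ^ 2) u p)
      ≤ ∫⁻ p in halfPlane, ENNReal.ofReal 4 *
          ENNReal.ofReal (cosh (a * p.2) ^ 2 * energyDensity (ε ^ 2) u p) := by
        gcongr with p
        rw [← ENNReal.ofReal_mul zero_le_four, ← mul_assoc]
        exact ENNReal.ofReal_le_ofReal <| mul_le_mul_of_nonneg_right
          (exp_two_mul_abs_le_cosh_sq a p.2) (energyDensity_nonneg (sq_nonneg ε) u p)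
    _ ≤ ENNReal.ofReal 4 * ENNReal.ofReal (C * ∫ p in halfPlane, ‖u p‖ ^ 2) := by
        rw [lintegral_const_mul' _ _ ENNReal.ofReal_ne_top]
        refine mul_le_mul_right (hcosh.trans (ENNReal.ofReal_le_ofReal ?_)) _
        have hcoeff : 8 * a ^ 2 * ε ^ 2 ≤ 8 * a ^ 2 := mul_le_of_le_one_right (by positivity) hε2
        exact mul_le_mul_of_nonneg_right (mul_le_mul_of_nonneg_right (by linarith)
          (by positivity)) hmass
    _ = ENNReal.ofReal (4 * C * ∫ p in halfPlane, ‖u p‖ ^ 2) := by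
        rw [← ENNReal.ofReal_mul zero_le_four, ← mul_assoc]

lemma qPot_eq_modelPotential (B : ℝ) (m : ℤ) :
    qPot B m = modelPotential (B ^ (-(1 : ℝ) / 6)) ((m - B / 2) / √B) := by
  ext p
  rw [qPot, modelPotential, sliceMomentum]
  ring

lemma IsQEigenfunction.isNeumannEigenfunction {B lam : ℝ} {m : ℤ} {ψ : ℝ × ℝ → ℂ}
    (hψ : IsQEigenfunction B m lam ψ) :
    IsNeumannEigenfunction (B ^ (-(1 : ℝ) / 3))
      (modelPotential (B ^ (-(1 : ℝ) / 6)) ((m - B / 2) / √B)) lam ψ := by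
  obtain ⟨hsmooth, hmass, -, -, -, heigen, hneumann⟩ := hψ
  refine ⟨contDiff_infty.1 hsmooth 2, hmass, fun p hp => ?_, hneumann⟩
  have hp_eigen := heigen p hp
  rw [d2τ, d2ρ, ← Complex.real_smul] at hp_eigen
  rw [← qPot_eq_modelPotential, Complex.real_smul (x := qPot B m p - lam), Complex.ofReal_sub]
  linear_combination -hp_eigen

theorem statement8_general (ω a : ℝ) :
    ∃ B₀ C₀ : ℝ, 0 < B₀ ∧ 0 < C₀ ∧ ∀ B, B₀ < B → ∀ (δ lam : ℝ) (u : ℝ × ℝ → E),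
      IsNeumannEigenfunction (B ^ (-(1 : ℝ) / 3)) (modelPotential (B ^ (-(1 : ℝ) / 6)) δ) lam u →
      lam ≤ Theta0 + ω * B ^ (-(1 : ℝ) / 3) →
      ∫⁻ p in halfPlane, ENNReal.ofReal (exp (2 * a * |p.2|) *
          (‖u p‖ ^ 2 + ‖fderiv ℝ u p (1, 0)‖ ^ 2 +
            B ^ (-(1 : ℝ) / 3) * ‖fderiv ℝ u p (0, 1)‖ ^ 2)) ≤
        ENNReal.ofReal (C₀ * ∫ p in halfPlane, ‖u p‖ ^ 2) := by
  obtain ⟨ε₀, C, hε₀, hC, hdecay⟩ := exists_lintegral_exp_le (E := E) ω a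
  refine ⟨ε₀ ^ (-6 : ℝ), C, by positivity, hC, fun B hB δ lam u hu hlam => ?_⟩
  have hB₀ : 0 < B := (rpow_pos_of_pos hε₀ _).trans hB
  have hε : B ^ (-(1 : ℝ) / 6) ≤ ε₀ := by
    rw [show -(1 : ℝ) / 6 = (-6)⁻¹ by norm_num]
    exact ((rpow_inv_lt_iff_of_neg hB₀ hε₀ (by norm_num)).2 hB).le
  have hsq : B ^ (-(1 : ℝ) / 3) = (B ^ (-(1 : ℝ) / 6)) ^ 2 := by
    rw [← rpow_mul_natCast hB₀.le]
    norm_num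
  rw [hsq] at hu hlam ⊢
  exact hdecay _ (rpow_pos_of_pos hB₀ _) hε δ lam u hu hlam

end Conclusion

/-- Proposition 3.1: exponential localization in `ρ` of low-energy
eigenfunctions of `Q_m(B)`. -/
theorem statement8 (ω a : ℝ) (hω : 0 < ω) (ha : 0 < a) :
    ∃ B₀ C₀ : ℝ, 0 < B₀ ∧ 0 < C₀ ∧
      ∀ B : ℝ, B₀ < B → ∀ (m : ℤ) (lam : ℝ) (ψ : ℝ × ℝ → ℂ),
        IsQEigenfunction B m lam ψ →
        lam ≤ Theta0 + ω * B ^ (-(1:ℝ)/3) →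
        (∫⁻ p in halfPlane, ENNReal.ofReal (Real.exp (2 * a * |p.2|) *
            (‖ψ p‖ ^ 2 + ‖fderiv ℝ ψ p ((1:ℝ), (0:ℝ))‖ ^ 2
              + B ^ (-(1:ℝ)/3) * ‖fderiv ℝ ψ p ((0:ℝ), (1:ℝ))‖ ^ 2)))
          ≤ ENNReal.ofReal (C₀ * ∫ p in halfPlane, ‖ψ p‖ ^ 2) := by
  obtain ⟨B₀, C₀, hB₀, hC₀, hdecay⟩ := statement8_general (E := ℂ) ω a
  exact ⟨B₀, C₀, hB₀, hC₀, fun B hB m lam ψ hψ =>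
    hdecay B hB ((m - B / 2) / √B) lam ψ hψ.isNeumannEigenfunction⟩
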